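/- arXiv:1005.5638 — 4 statements merged into one kernel-verified Lean document; each statement's English description precedes it below -/
import Mathlib

section
/- Let (v¹, v², ξ₁, ξ₂, ξ₃) be a classical solution of the backward coupled observer system on [0,T], and define the Lyapunov function V(t) := (1/2)·(∫₀¹ (|∂ₓv¹(t,x)|² + |v²(t,x)|²) dx + γ₁ω²·ξ₁(t)² + γ₁·ξ₂(t)²). Then V is differentiable on [0,T] and V'(t) = −γ₁γ₂ω²·ξ₁(t)² ≤ 0 for every t ∈ [0,T]. (This shows that the same Lyapunov function decreases along the time-reversed observer dynamics, which is the key design property of the back-and-forth scheme.) -/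
open Set Filter MeasureTheory intervalIntegral

/-- A classical solution of the backward (time-reversed) coupled observer system on
`[0,T]`: `∂ₜv¹ = −v²`, `∂ₜv² = −∂ₓₓv¹` on `[0,T] × [0,1]`, boundary conditions
`v¹(t,1) = 0`, `v¹(t,0) = γ₁ξ₁(t) + γ₁γ₂ξ₃(t)`, and the observer ODEs
`ξ₁' = −ξ₂ − γ₂ξ₁`, `ξ₂' = ω²ξ₁ − ∂ₓv¹(·,0)`, `ξ₃' = ξ₁` on `[0,T]`. -/
structure BwdObserverSol (T ω γ₁ γ₂ : ℝ) where
  v1 : ℝ → ℝ → ℝ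
  v2 : ℝ → ℝ → ℝ
  ξ1 : ℝ → ℝ
  ξ2 : ℝ → ℝ
  ξ3 : ℝ → ℝ
  smooth_v1 : ContDiff ℝ 2 (Function.uncurry v1)
  smooth_v2 : ContDiff ℝ 2 (Function.uncurry v2)
  smooth_ξ1 : ContDiff ℝ 1 ξ1
  smooth_ξ2 : ContDiff ℝ 1 ξ2
  smooth_ξ3 : ContDiff ℝ 1 ξ3
  pde1 : ∀ t ∈ Icc (0:ℝ) T, ∀ x ∈ Icc (0:ℝ) 1, deriv (fun s => v1 s x) t = -v2 t x
  pde2 : ∀ t ∈ Icc (0:ℝ) T, ∀ x ∈ Icc (0:ℝ) 1,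
    deriv (fun s => v2 s x) t = -deriv (deriv (fun y => v1 t y)) x
  bc1 : ∀ t ∈ Icc (0:ℝ) T, v1 t 1 = 0
  bc0 : ∀ t ∈ Icc (0:ℝ) T, v1 t 0 = γ₁ * ξ1 t + γ₁ * γ₂ * ξ3 t
  ode1 : ∀ t ∈ Icc (0:ℝ) T, deriv ξ1 t = -ξ2 t - γ₂ * ξ1 t
  ode2 : ∀ t ∈ Icc (0:ℝ) T, deriv ξ2 t = ω ^ 2 * ξ1 t - deriv (fun y => v1 t y) 0
  ode3 : ∀ t ∈ Icc (0:ℝ) T, deriv ξ3 t = ξ1 t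

/-!
The wave energy `½ ∫ (‖uₓ‖² + ‖v‖²)` of a system `uₜ = c v`, `vₜ = c uₓₓ` changes only through the
boundary flux `c ⟪uₓ, v⟫`, because its density has time derivative
`c (⟪uₓ, vₓ⟫ + ⟪uₓₓ, v⟫) = c ⟪uₓ, v⟫ₓ`. Here `c = -1`. Differentiating the boundary conditions in
time gives `v² = 0` at `x = 1` and `v² = γ₁ ξ₂` at `x = 0`: the term `γ₁ γ₂ ξ₃` of the boundary
value cancels the damping term of `ξ₁'`. The flux `γ₁ ξ₂ ∂ₓv¹(·, 0)` entering at `x = 0` is then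
exactly what the oscillator `(ξ₁, ξ₂)`, weighted by `γ₁`, gives off, and only its damping survives.
-/

open scoped RealInnerProductSpace Topology

section PartialDerivatives

variable {𝕜 E : Type*} [NontriviallyNormedField 𝕜] [NormedAddCommGroup E] [NormedSpace 𝕜 E]

theorem eq_of_hasDerivAt_of_eqOn {f g : 𝕜 → E} {f' g' : E} {s : Set 𝕜} {x : 𝕜}
    (hf : HasDerivAt f f' x) (hg : HasDerivAt g g' x) (hfg : EqOn f g s)
    (hs : UniqueDiffWithinAt 𝕜 s x) (hx : x ∈ s) : f' = g' :=
  hs.eq_deriv s hf.hasDerivWithinAt (hg.hasDerivWithinAt.congr hfg (hfg hx))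

theorem hasDerivAt_left_of_differentiableAt {f : 𝕜 × 𝕜 → E} {t x : 𝕜}
    (hf : DifferentiableAt 𝕜 f (t, x)) :
    HasDerivAt (fun s => f (s, x)) (fderiv 𝕜 f (t, x) (1, 0)) t :=
  hf.hasFDerivAt.comp_hasDerivAt t ((hasDerivAt_id t).prodMk (hasDerivAt_const t x))

theorem hasDerivAt_right_of_differentiableAt {f : 𝕜 × 𝕜 → E} {t x : 𝕜}
    (hf : DifferentiableAt 𝕜 f (t, x)) :
    HasDerivAt (fun y => f (t, y)) (fderiv 𝕜 f (t, x) (0, 1)) x :=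
  hf.hasFDerivAt.comp_hasDerivAt x ((hasDerivAt_const x t).prodMk (hasDerivAt_id x))

variable {u : 𝕜 → 𝕜 → E} {m n : WithTop ℕ∞}

theorem differentiable_left_of_contDiff_uncurry (hu : ContDiff 𝕜 n (Function.uncurry u))
    (hn : n ≠ 0) (x : 𝕜) : Differentiable 𝕜 fun s => u s x :=
  (hu.comp (contDiff_prodMk_left x)).differentiable hn

theorem differentiable_right_of_contDiff_uncurry (hu : ContDiff 𝕜 n (Function.uncurry u))
    (hn : n ≠ 0) (t : 𝕜) : Differentiable 𝕜 (u t) :=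
  (hu.comp (contDiff_prodMk_right t)).differentiable hn

theorem contDiff_uncurry_deriv_left (hu : ContDiff 𝕜 n (Function.uncurry u)) (hmn : m + 1 ≤ n) :
    ContDiff 𝕜 m (Function.uncurry fun t x => deriv (fun s => u s x) t) :=
  ContDiff.fderiv_apply (f := fun (p : 𝕜 × 𝕜) s => u s p.2)
    (hu.comp (contDiff_snd.prodMk (contDiff_snd.comp contDiff_fst))) contDiff_fst
    contDiff_const hmn

theorem contDiff_uncurry_deriv_right (hu : ContDiff 𝕜 n (Function.uncurry u)) (hmn : m + 1 ≤ n) :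
    ContDiff 𝕜 m (Function.uncurry fun t x => deriv (u t) x) :=
  ContDiff.fderiv_apply (f := fun (p : 𝕜 × 𝕜) y => u p.1 y)
    (hu.comp ((contDiff_fst.comp contDiff_fst).prodMk contDiff_snd)) contDiff_snd
    contDiff_const hmn

theorem deriv_deriv_comm_of_contDiff_uncurry [IsRCLikeNormedField 𝕜]
    (hu : ContDiff 𝕜 2 (Function.uncurry u)) (t x : 𝕜) :
    deriv (fun s => deriv (u s) x) t = deriv (fun y => deriv (fun s => u s y) t) x := by
  have hu_diff := hu.differentiable two_ne_zero
  have hu'_diff : DifferentiableAt 𝕜 (fderiv 𝕜 (Function.uncurry u)) (t, x) :=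
    (hu.fderiv_right (m := 1) one_add_one_eq_two.le).differentiable one_ne_zero _
  have hright (s : 𝕜) : deriv (u s) x = fderiv 𝕜 (Function.uncurry u) (s, x) (0, 1) :=
    (hasDerivAt_right_of_differentiableAt (hu_diff (s, x))).deriv
  have hleft (y : 𝕜) :
      deriv (fun s => u s y) t = fderiv 𝕜 (Function.uncurry u) (t, y) (1, 0) :=
    (hasDerivAt_left_of_differentiableAt (hu_diff (t, y))).deriv
  simp only [hright, hleft]
  rw [((hasDerivAt_left_of_differentiableAt hu'_diff).clm_apply (hasDerivAt_const t _)).deriv,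
    ((hasDerivAt_right_of_differentiableAt hu'_diff).clm_apply (hasDerivAt_const x _)).deriv]
  simp only [map_zero, add_zero]
  exact (hu.contDiffAt.isSymmSndFDerivAt (by simp)).eq _ _

end PartialDerivatives

section ParametricIntegral

variable {E : Type*} [NormedAddCommGroup E] [NormedSpace ℝ E]

theorem hasDerivAt_intervalIntegral_of_contDiff_uncurry {F : ℝ → ℝ → E}
    (hF : ContDiff ℝ 1 (Function.uncurry F)) (a b t : ℝ) :
    HasDerivAt (fun s => ∫ x in a..b, F s x) (∫ x in a..b, deriv (fun s => F s x) t) t := by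
  have hF' : Continuous (Function.uncurry fun s x => deriv (fun r => F r x) s) :=
    (contDiff_uncurry_deriv_left (m := 0) hF (zero_add 1).le).continuous
  obtain ⟨C, hC⟩ := ((isCompact_Icc (a := t - 1) (b := t + 1)).prod
    (isCompact_uIcc (a := a) (b := b))).exists_bound_of_continuousOn hF'.continuousOn
  have hslice (s : ℝ) : Continuous (F s) := hF.continuous.comp (.prodMk_right s)
  refine (hasDerivAt_integral_of_dominated_loc_of_deriv_le (bound := fun _ => C)
    (Icc_mem_nhds (sub_one_lt t) (lt_add_one t))
    (.of_forall fun s => (hslice s).aestronglyMeasurable) ((hslice t).intervalIntegrable a b)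
    (hF'.comp (.prodMk_right t)).aestronglyMeasurable
    (.of_forall fun x hx s hs => hC (s, x) ⟨hs, uIoc_subset_uIcc hx⟩)
    intervalIntegrable_const (.of_forall fun x _ s _ => ?_)).2
  exact (differentiable_left_of_contDiff_uncurry hF one_ne_zero x s).hasDerivAt

end ParametricIntegral

section WaveEnergy

variable {E : Type*} [NormedAddCommGroup E]

/-- The energy `½ ∫ₐᵇ (‖∂ₓu‖² + ‖v‖²) dx` at time `t` of the wave with displacement `u` and
velocity `±v`, both taken as functions of time, then position. -/
noncomputable def waveEnergy [NormedSpace ℝ E] (u v : ℝ → ℝ → E) (a b t : ℝ) : ℝ :=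
  (1 / 2) * ∫ x in a..b, (‖deriv (u t) x‖ ^ 2 + ‖v t x‖ ^ 2)

variable [InnerProductSpace ℝ E] {u v : ℝ → ℝ → E} {a b c t x : ℝ}

theorem deriv_waveEnergyDensity (hu : ContDiff ℝ 2 (Function.uncurry u))
    (hv : ContDiff ℝ 1 (Function.uncurry v))
    (hut : ∀ᶠ y in 𝓝 x, deriv (fun s => u s y) t = c • v t y)
    (hvt : deriv (fun s => v s x) t = c • deriv (deriv (u t)) x) :
    deriv (fun s => ‖deriv (u s) x‖ ^ 2 + ‖v s x‖ ^ 2) t =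
      2 * c * (⟪deriv (u t) x, deriv (v t) x⟫ + ⟪deriv (deriv (u t)) x, v t x⟫) := by
  have hux : ContDiff ℝ 1 (Function.uncurry fun s y => deriv (u s) y) :=
    contDiff_uncurry_deriv_right hu one_add_one_eq_two.le
  have huxt : deriv (fun s => deriv (u s) x) t = c • deriv (v t) x := calc
    _ = deriv (fun y => deriv (fun s => u s y) t) x := deriv_deriv_comm_of_contDiff_uncurry hu t x
    _ = deriv (fun y => c • v t y) x := EventuallyEq.deriv_eq hut
    _ = c • deriv (v t) x :=
      deriv_fun_const_smul c (differentiable_right_of_contDiff_uncurry hv one_ne_zero t x)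
  have hux_deriv := (differentiable_left_of_contDiff_uncurry hux one_ne_zero x t).hasDerivAt
  have hv_deriv := (differentiable_left_of_contDiff_uncurry hv one_ne_zero x t).hasDerivAt
  rw [(hux_deriv.norm_sq.fun_add hv_deriv.norm_sq).deriv, huxt, hvt, inner_smul_right,
    inner_smul_right, real_inner_comm (v t x)]
  ring

theorem hasDerivAt_waveEnergy (hab : a ≤ b) (hu : ContDiff ℝ 2 (Function.uncurry u))
    (hv : ContDiff ℝ 1 (Function.uncurry v))
    (hut : ∀ x ∈ Ioo a b, deriv (fun s => u s x) t = c • v t x)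
    (hvt : ∀ x ∈ Ioo a b, deriv (fun s => v s x) t = c • deriv (deriv (u t)) x) :
    HasDerivAt (waveEnergy u v a b)
      (c * (⟪deriv (u t) b, v t b⟫ - ⟪deriv (u t) a, v t a⟫)) t := by
  have hux : ContDiff ℝ 1 (Function.uncurry fun s y => deriv (u s) y) :=
    contDiff_uncurry_deriv_right hu one_add_one_eq_two.le
  have hdensity :
      ContDiff ℝ 1 (Function.uncurry fun s x => ‖deriv (u s) x‖ ^ 2 + ‖v s x‖ ^ 2) :=
    (hux.norm_sq ℝ).add (hv.norm_sq ℝ)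
  have hux_diff := differentiable_right_of_contDiff_uncurry hux one_ne_zero t
  have hv_diff := differentiable_right_of_contDiff_uncurry hv one_ne_zero t
  have hflux : ∀ x ∈ Ioo a b, HasDerivAt (fun y => 2 * c * ⟪deriv (u t) y, v t y⟫)
      (deriv (fun s => ‖deriv (u s) x‖ ^ 2 + ‖v s x‖ ^ 2) t) x := fun x hx => by
    rw [deriv_waveEnergyDensity hu hv (eventually_of_mem (Ioo_mem_nhds hx.1 hx.2) hut) (hvt x hx)]
    exact ((hux_diff x).hasDerivAt.inner ℝ (hv_diff x).hasDerivAt).const_mul (2 * c)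
  have hdensity_deriv_cont : Continuous fun x =>
      deriv (fun s => ‖deriv (u s) x‖ ^ 2 + ‖v s x‖ ^ 2) t :=
    (contDiff_uncurry_deriv_left (m := 0) hdensity (zero_add 1).le).continuous.comp
      (.prodMk_right t)
  have henergy := hasDerivAt_intervalIntegral_of_contDiff_uncurry hdensity a b t
  rw [integral_eq_sub_of_hasDerivAt_of_le hab
    (continuous_const.mul (hux_diff.continuous.inner hv_diff.continuous)).continuousOn hflux
    (hdensity_deriv_cont.intervalIntegrable a b)] at henergy
  refine (henergy.const_mul (1 / 2)).congr_deriv ?_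
  ring

end WaveEnergy

namespace BwdObserverSol

variable {T ω γ₁ γ₂ t : ℝ} (S : BwdObserverSol T ω γ₁ γ₂)

theorem hasDerivAt_v1 (ht : t ∈ Icc 0 T) {x : ℝ} (hx : x ∈ Icc (0 : ℝ) 1) :
    HasDerivAt (fun s => S.v1 s x) (-S.v2 t x) t :=
  S.pde1 t ht x hx ▸
    (differentiable_left_of_contDiff_uncurry S.smooth_v1 two_ne_zero x t).hasDerivAt

theorem hasDerivAt_ξ1 (ht : t ∈ Icc 0 T) : HasDerivAt S.ξ1 (-S.ξ2 t - γ₂ * S.ξ1 t) t :=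
  S.ode1 t ht ▸ (S.smooth_ξ1.differentiable one_ne_zero t).hasDerivAt

theorem hasDerivAt_ξ2 (ht : t ∈ Icc 0 T) :
    HasDerivAt S.ξ2 (ω ^ 2 * S.ξ1 t - deriv (S.v1 t) 0) t :=
  S.ode2 t ht ▸ (S.smooth_ξ2.differentiable one_ne_zero t).hasDerivAt

theorem hasDerivAt_ξ3 (ht : t ∈ Icc 0 T) : HasDerivAt S.ξ3 (S.ξ1 t) t :=
  S.ode3 t ht ▸ (S.smooth_ξ3.differentiable one_ne_zero t).hasDerivAt

theorem v2_one (hT : 0 < T) (ht : t ∈ Icc 0 T) : S.v2 t 1 = 0 :=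
  neg_eq_zero.mp <| eq_of_hasDerivAt_of_eqOn
    (S.hasDerivAt_v1 ht (right_mem_Icc.mpr zero_le_one)) (hasDerivAt_const t 0) S.bc1
    (uniqueDiffOn_Icc hT t ht) ht

theorem v2_zero (hT : 0 < T) (ht : t ∈ Icc 0 T) : S.v2 t 0 = γ₁ * S.ξ2 t := by
  have hbc := eq_of_hasDerivAt_of_eqOn
    (S.hasDerivAt_v1 ht (left_mem_Icc.mpr zero_le_one))
    (((S.hasDerivAt_ξ1 ht).const_mul γ₁).add ((S.hasDerivAt_ξ3 ht).const_mul (γ₁ * γ₂))) S.bc0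
    (uniqueDiffOn_Icc hT t ht) ht
  linear_combination -hbc

theorem hasDerivAt_waveEnergy_v1_v2 (hT : 0 < T) (ht : t ∈ Icc 0 T) :
    HasDerivAt (waveEnergy S.v1 S.v2 0 1) (γ₁ * S.ξ2 t * deriv (S.v1 t) 0) t := by
  have henergy := hasDerivAt_waveEnergy (c := -1) zero_le_one S.smooth_v1
    (S.smooth_v2.of_le one_le_two)
    (fun x hx => by rw [neg_one_smul, S.pde1 t ht x (Ioo_subset_Icc_self hx)])
    (fun x hx => by rw [neg_one_smul, S.pde2 t ht x (Ioo_subset_Icc_self hx)])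
  refine henergy.congr_deriv ?_
  rw [S.v2_one hT ht, S.v2_zero hT ht, inner_zero_right, RCLike.inner_apply, conj_trivial]
  ring

/-- The energy `½ (ω² ξ₁² + ξ₂²)` of the oscillator part of the observer, the finite-dimensional
summand of the Lyapunov function before weighting by `γ₁`. -/
noncomputable def oscillatorEnergy (t : ℝ) : ℝ :=
  (1 / 2) * (ω ^ 2 * S.ξ1 t ^ 2 + S.ξ2 t ^ 2)

theorem hasDerivAt_oscillatorEnergy (ht : t ∈ Icc 0 T) :
    HasDerivAt S.oscillatorEnergy
      (-(γ₂ * ω ^ 2 * S.ξ1 t ^ 2) - S.ξ2 t * deriv (S.v1 t) 0) t := by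
  refine (((((S.hasDerivAt_ξ1 ht).pow 2).const_mul (ω ^ 2)).add
    ((S.hasDerivAt_ξ2 ht).pow 2)).const_mul (1 / 2)).congr_deriv ?_
  push_cast
  ring

/-- The Lyapunov function of the backward observer system: the energy of the wave plus `γ₁` times
that of the oscillator. -/
noncomputable def lyapunov (t : ℝ) : ℝ :=
  waveEnergy S.v1 S.v2 0 1 t + γ₁ * S.oscillatorEnergy t

theorem hasDerivAt_lyapunov (hT : 0 < T) (ht : t ∈ Icc 0 T) :
    HasDerivAt S.lyapunov (-(γ₁ * γ₂ * ω ^ 2 * S.ξ1 t ^ 2)) t := by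
  refine ((S.hasDerivAt_waveEnergy_v1_v2 hT ht).add
    ((S.hasDerivAt_oscillatorEnergy ht).const_mul γ₁)).congr_deriv ?_
  ring

end BwdObserverSol

/-- the same Lyapunov function
`V(t) = ½(∫₀¹(|∂ₓv¹|² + |v²|²) dx + γ₁ω²ξ₁² + γ₁ξ₂²)` also decreases along the
backward (time-reversed) observer dynamics, with `V'(t) = −γ₁γ₂ω²ξ₁(t)² ≤ 0`. -/
theorem backward_lyapunov_decrease
    (T ω γ₁ γ₂ : ℝ) (hT : 0 < T) (hγ₁ : 0 < γ₁) (hγ₂ : 0 < γ₂)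
    (S : BwdObserverSol T ω γ₁ γ₂)
    (V : ℝ → ℝ)
    (hV : V = fun t =>
      (1 / 2) * ((∫ x in (0:ℝ)..1,
          ((deriv (fun y => S.v1 t y) x) ^ 2 + (S.v2 t x) ^ 2))
        + γ₁ * ω ^ 2 * (S.ξ1 t) ^ 2 + γ₁ * (S.ξ2 t) ^ 2)) :
    ∀ t ∈ Icc (0:ℝ) T,
      HasDerivAt V (-(γ₁ * γ₂ * ω ^ 2 * (S.ξ1 t) ^ 2)) t
        ∧ -(γ₁ * γ₂ * ω ^ 2 * (S.ξ1 t) ^ 2) ≤ 0 := by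
  have hV_eq : V = S.lyapunov := by
    rw [hV]
    funext s
    simp only [BwdObserverSol.lyapunov, BwdObserverSol.oscillatorEnergy, waveEnergy,
      Real.norm_eq_abs, sq_abs]
    ring
  intro t ht
  exact ⟨hV_eq ▸ S.hasDerivAt_lyapunov hT ht, neg_nonpos.mpr (by positivity)⟩
end

section
/- Let (v¹, v², ξ₁, ξ₂, ξ₃) be a classical solution of the back-and-forth periodic system on [0,∞). Then for every t ≥ 0: ∫₀¹ (|∂ₓv¹(t,x)|² + |v²(t,x)|²) dx + γ₁·ξ₂(t)² + γ₁ω²·ξ₁(t)² + 2γ₁γ₂ω² · ∫₀ᵗ ξ₁(s)² ds = ∫₀¹ (|∂ₓv¹(0,x)|² + |v²(0,x)|²) dx + γ₁·ξ₂(0)² + γ₁ω²·ξ₁(0)². (This is the global-in-time energy identity (26) for the back-and-forth dynamics; in particular ξ₁ ∈ L²(0,∞) when ω ≠ 0.) -/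
open Set Filter MeasureTheory intervalIntegral

/-- A classical solution of the back-and-forth periodic system on `[0,∞)` with
switching period `T`: on each forward strip `[2kT,(2k+1)T]` it solves
`∂ₜv¹ = v²`, `∂ₜv² = ∂ₓₓv¹`, `ξ₁' = ξ₂ − γ₂ξ₁`, `ξ₂' = −ω²ξ₁ + ∂ₓv¹(·,0)`,
`ξ₃' = ξ₁`; on each backward strip `[(2k+1)T,(2k+2)T]` it solves the time-reversed
equations; it satisfies the boundary conditions `v¹(t,1) = 0` and
`v¹(t,0) = γ₁ξ₁(t) + γ₁γ₂ξ₃(t)`; it is continuous globally and `C²` (resp. `C¹`)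
on each strip (resp. interval), the derivatives on the strips being derivatives
within the strips. -/
structure BackAndForthSol (T ω γ₁ γ₂ : ℝ) where
  v1 : ℝ → ℝ → ℝ
  v2 : ℝ → ℝ → ℝ
  ξ1 : ℝ → ℝ
  ξ2 : ℝ → ℝ
  ξ3 : ℝ → ℝ
  cont_v1 : ContinuousOn (Function.uncurry v1) (Ici 0 ×ˢ Icc 0 1)
  cont_v2 : ContinuousOn (Function.uncurry v2) (Ici 0 ×ˢ Icc 0 1)
  cont_ξ1 : ContinuousOn ξ1 (Ici 0)
  cont_ξ2 : ContinuousOn ξ2 (Ici 0)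
  cont_ξ3 : ContinuousOn ξ3 (Ici 0)
  smooth_v1_fwd : ∀ k : ℕ, ContDiffOn ℝ 2 (Function.uncurry v1)
    (Icc (2 * (k:ℝ) * T) ((2 * (k:ℝ) + 1) * T) ×ˢ Icc (0:ℝ) 1)
  smooth_v2_fwd : ∀ k : ℕ, ContDiffOn ℝ 2 (Function.uncurry v2)
    (Icc (2 * (k:ℝ) * T) ((2 * (k:ℝ) + 1) * T) ×ˢ Icc (0:ℝ) 1)
  smooth_v1_bwd : ∀ k : ℕ, ContDiffOn ℝ 2 (Function.uncurry v1)
    (Icc ((2 * (k:ℝ) + 1) * T) ((2 * (k:ℝ) + 2) * T) ×ˢ Icc (0:ℝ) 1)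
  smooth_v2_bwd : ∀ k : ℕ, ContDiffOn ℝ 2 (Function.uncurry v2)
    (Icc ((2 * (k:ℝ) + 1) * T) ((2 * (k:ℝ) + 2) * T) ×ˢ Icc (0:ℝ) 1)
  smooth_ξ1_fwd : ∀ k : ℕ, ContDiffOn ℝ 1 ξ1 (Icc (2 * (k:ℝ) * T) ((2 * (k:ℝ) + 1) * T))
  smooth_ξ2_fwd : ∀ k : ℕ, ContDiffOn ℝ 1 ξ2 (Icc (2 * (k:ℝ) * T) ((2 * (k:ℝ) + 1) * T))
  smooth_ξ3_fwd : ∀ k : ℕ, ContDiffOn ℝ 1 ξ3 (Icc (2 * (k:ℝ) * T) ((2 * (k:ℝ) + 1) * T))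
  smooth_ξ1_bwd : ∀ k : ℕ, ContDiffOn ℝ 1 ξ1 (Icc ((2 * (k:ℝ) + 1) * T) ((2 * (k:ℝ) + 2) * T))
  smooth_ξ2_bwd : ∀ k : ℕ, ContDiffOn ℝ 1 ξ2 (Icc ((2 * (k:ℝ) + 1) * T) ((2 * (k:ℝ) + 2) * T))
  smooth_ξ3_bwd : ∀ k : ℕ, ContDiffOn ℝ 1 ξ3 (Icc ((2 * (k:ℝ) + 1) * T) ((2 * (k:ℝ) + 2) * T))
  pde1_fwd : ∀ k : ℕ, ∀ t ∈ Icc (2 * (k:ℝ) * T) ((2 * (k:ℝ) + 1) * T),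
    ∀ x ∈ Icc (0:ℝ) 1,
    derivWithin (fun s => v1 s x) (Icc (2 * (k:ℝ) * T) ((2 * (k:ℝ) + 1) * T)) t = v2 t x
  pde2_fwd : ∀ k : ℕ, ∀ t ∈ Icc (2 * (k:ℝ) * T) ((2 * (k:ℝ) + 1) * T),
    ∀ x ∈ Icc (0:ℝ) 1,
    derivWithin (fun s => v2 s x) (Icc (2 * (k:ℝ) * T) ((2 * (k:ℝ) + 1) * T)) t
      = derivWithin (fun y => derivWithin (fun y' => v1 t y') (Icc (0:ℝ) 1) y)
          (Icc (0:ℝ) 1) x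
  pde1_bwd : ∀ k : ℕ, ∀ t ∈ Icc ((2 * (k:ℝ) + 1) * T) ((2 * (k:ℝ) + 2) * T),
    ∀ x ∈ Icc (0:ℝ) 1,
    derivWithin (fun s => v1 s x) (Icc ((2 * (k:ℝ) + 1) * T) ((2 * (k:ℝ) + 2) * T)) t
      = -v2 t x
  pde2_bwd : ∀ k : ℕ, ∀ t ∈ Icc ((2 * (k:ℝ) + 1) * T) ((2 * (k:ℝ) + 2) * T),
    ∀ x ∈ Icc (0:ℝ) 1,
    derivWithin (fun s => v2 s x) (Icc ((2 * (k:ℝ) + 1) * T) ((2 * (k:ℝ) + 2) * T)) t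
      = -derivWithin (fun y => derivWithin (fun y' => v1 t y') (Icc (0:ℝ) 1) y)
          (Icc (0:ℝ) 1) x
  ode1_fwd : ∀ k : ℕ, ∀ t ∈ Icc (2 * (k:ℝ) * T) ((2 * (k:ℝ) + 1) * T),
    derivWithin ξ1 (Icc (2 * (k:ℝ) * T) ((2 * (k:ℝ) + 1) * T)) t = ξ2 t - γ₂ * ξ1 t
  ode2_fwd : ∀ k : ℕ, ∀ t ∈ Icc (2 * (k:ℝ) * T) ((2 * (k:ℝ) + 1) * T),
    derivWithin ξ2 (Icc (2 * (k:ℝ) * T) ((2 * (k:ℝ) + 1) * T)) t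
      = -ω ^ 2 * ξ1 t + derivWithin (fun y => v1 t y) (Icc (0:ℝ) 1) 0
  ode3_fwd : ∀ k : ℕ, ∀ t ∈ Icc (2 * (k:ℝ) * T) ((2 * (k:ℝ) + 1) * T),
    derivWithin ξ3 (Icc (2 * (k:ℝ) * T) ((2 * (k:ℝ) + 1) * T)) t = ξ1 t
  ode1_bwd : ∀ k : ℕ, ∀ t ∈ Icc ((2 * (k:ℝ) + 1) * T) ((2 * (k:ℝ) + 2) * T),
    derivWithin ξ1 (Icc ((2 * (k:ℝ) + 1) * T) ((2 * (k:ℝ) + 2) * T)) t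
      = -ξ2 t - γ₂ * ξ1 t
  ode2_bwd : ∀ k : ℕ, ∀ t ∈ Icc ((2 * (k:ℝ) + 1) * T) ((2 * (k:ℝ) + 2) * T),
    derivWithin ξ2 (Icc ((2 * (k:ℝ) + 1) * T) ((2 * (k:ℝ) + 2) * T)) t
      = ω ^ 2 * ξ1 t - derivWithin (fun y => v1 t y) (Icc (0:ℝ) 1) 0
  ode3_bwd : ∀ k : ℕ, ∀ t ∈ Icc ((2 * (k:ℝ) + 1) * T) ((2 * (k:ℝ) + 2) * T),
    derivWithin ξ3 (Icc ((2 * (k:ℝ) + 1) * T) ((2 * (k:ℝ) + 2) * T)) t = ξ1 t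
  bc1 : ∀ t ∈ Ici (0:ℝ), v1 t 1 = 0
  bc0 : ∀ t ∈ Ici (0:ℝ), v1 t 0 = γ₁ * ξ1 t + γ₁ * γ₂ * ξ3 t

/-! The energy density `e = (∂ₓu)² + w²` of `∂ₜu = σw`, `∂ₜw = σ∂ₓₓu` obeys the conservation law
`∂ₜe = ∂ₓ(2σ w ∂ₓu)`, by symmetry of the mixed derivative of `u`. The divergence theorem on a
rectangle turns this into an energy balance through the boundary fluxes. The boundary conditions,
differentiated in time, force `w = 0` at `x = 1` and `w = γ₁ξ₂` at `x = 0`, so that the flux at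
`x = 0` is exactly the power fed into the oscillator; only its damping `-2γ₁γ₂ω²ξ₁²` is left over.
The direction of time `σ = ±1` drops out, since the damping term does not change sign with it. -/

section PartialDerivatives

variable {𝕜 E : Type*} [NontriviallyNormedField 𝕜] [NormedAddCommGroup E] [NormedSpace 𝕜 E]
  {I J : Set 𝕜} {t x : 𝕜}

theorem hasDerivWithinAt_fst_of_differentiableWithinAt {f : 𝕜 × 𝕜 → E}
    (hf : DifferentiableWithinAt 𝕜 f (I ×ˢ J) (t, x)) (hx : x ∈ J) :
    HasDerivWithinAt (fun s => f (s, x)) (fderivWithin 𝕜 f (I ×ˢ J) (t, x) (1, 0)) I t :=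
  hf.hasFDerivWithinAt.comp_hasDerivWithinAt (f := fun s => (s, x)) t
    ((hasDerivWithinAt_id t I).prodMk (hasDerivWithinAt_const t I x)) fun _ hs => ⟨hs, hx⟩

theorem hasDerivWithinAt_snd_of_differentiableWithinAt {f : 𝕜 × 𝕜 → E}
    (hf : DifferentiableWithinAt 𝕜 f (I ×ˢ J) (t, x)) (ht : t ∈ I) :
    HasDerivWithinAt (fun y => f (t, y)) (fderivWithin 𝕜 f (I ×ˢ J) (t, x) (0, 1)) J x :=
  hf.hasFDerivWithinAt.comp_hasDerivWithinAt (f := fun y => (t, y)) x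
    ((hasDerivWithinAt_const x J t).prodMk (hasDerivWithinAt_id x J)) fun _ hy => ⟨ht, hy⟩

theorem derivWithin_fst_eq_fderivWithin {u : 𝕜 → 𝕜 → E} (hI : UniqueDiffOn 𝕜 I)
    (hu : DifferentiableOn 𝕜 (Function.uncurry u) (I ×ˢ J)) (ht : t ∈ I) (hx : x ∈ J) :
    derivWithin (fun s => u s x) I t
      = fderivWithin 𝕜 (Function.uncurry u) (I ×ˢ J) (t, x) (1, 0) :=
  (hasDerivWithinAt_fst_of_differentiableWithinAt (hu (t, x) ⟨ht, hx⟩) hx).derivWithin (hI t ht)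

theorem derivWithin_snd_eq_fderivWithin {u : 𝕜 → 𝕜 → E} (hJ : UniqueDiffOn 𝕜 J)
    (hu : DifferentiableOn 𝕜 (Function.uncurry u) (I ×ˢ J)) (ht : t ∈ I) (hx : x ∈ J) :
    derivWithin (u t) J x = fderivWithin 𝕜 (Function.uncurry u) (I ×ˢ J) (t, x) (0, 1) :=
  (hasDerivWithinAt_snd_of_differentiableWithinAt (hu (t, x) ⟨ht, hx⟩) ht).derivWithin (hJ x hx)

theorem contDiffOn_derivWithin_snd {u : 𝕜 → 𝕜 → E} {m n : WithTop ℕ∞}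
    (hI : UniqueDiffOn 𝕜 I) (hJ : UniqueDiffOn 𝕜 J)
    (hu : ContDiffOn 𝕜 n (Function.uncurry u) (I ×ˢ J)) (hmn : m + 1 ≤ n) :
    ContDiffOn 𝕜 m (Function.uncurry fun s y => derivWithin (u s) J y) (I ×ˢ J) := by
  have hn : n ≠ 0 := (lt_of_lt_of_le (by simp) hmn).ne'
  refine ((hu.fderivWithin (hI.prod hJ) hmn).clm_apply
    (contDiffOn_const (c := ((0, 1) : 𝕜 × 𝕜)))).congr fun z hz => ?_
  exact derivWithin_snd_eq_fderivWithin hJ (hu.differentiableOn hn) hz.1 hz.2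

theorem derivWithin_derivWithin_comm [IsRCLikeNormedField 𝕜] {u : 𝕜 → 𝕜 → E}
    (hI : UniqueDiffOn 𝕜 I) (hJ : UniqueDiffOn 𝕜 J)
    (hu : ContDiffOn 𝕜 2 (Function.uncurry u) (I ×ˢ J)) (ht : t ∈ I) (hx : x ∈ J)
    (ht' : t ∈ closure (interior I)) (hx' : x ∈ closure (interior J)) :
    derivWithin (fun s => derivWithin (u s) J x) I t
      = derivWithin (fun y => derivWithin (fun s => u s y) I t) J x := by
  set D := fderivWithin 𝕜 (Function.uncurry u) (I ×ˢ J)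
  have hud := hu.differentiableOn two_ne_zero
  have hDd : DifferentiableWithinAt 𝕜 D (I ×ˢ J) (t, x) :=
    (hu.fderivWithin (m := 1) (hI.prod hJ) (by norm_num)).differentiableOn one_ne_zero _ ⟨ht, hx⟩
  have hsymm : IsSymmSndFDerivWithinAt 𝕜 (Function.uncurry u) (I ×ˢ J) (t, x) :=
    (hu (t, x) ⟨ht, hx⟩).isSymmSndFDerivWithinAt (by simp) (hI.prod hJ)
      (by rw [interior_prod_eq, closure_prod_eq]; exact ⟨ht', hx'⟩) ⟨ht, hx⟩
  have hleft := (hasDerivWithinAt_fst_of_differentiableWithinAt hDd hx).clm_apply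
    (hasDerivWithinAt_const t I ((0, 1) : 𝕜 × 𝕜))
  have hright := (hasDerivWithinAt_snd_of_differentiableWithinAt hDd ht).clm_apply
    (hasDerivWithinAt_const x J ((1, 0) : 𝕜 × 𝕜))
  calc derivWithin (fun s => derivWithin (u s) J x) I t
      = derivWithin (fun s => D (s, x) (0, 1)) I t :=
        derivWithin_congr (fun s hs => derivWithin_snd_eq_fderivWithin hJ hud hs hx)
          (derivWithin_snd_eq_fderivWithin hJ hud ht hx)
    _ = fderivWithin 𝕜 D (I ×ˢ J) (t, x) (1, 0) (0, 1) := by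
        simpa using hleft.derivWithin (hI t ht)
    _ = fderivWithin 𝕜 D (I ×ˢ J) (t, x) (0, 1) (1, 0) := hsymm _ _
    _ = derivWithin (fun y => D (t, y) (1, 0)) J x := by
        simpa using (hright.derivWithin (hJ x hx)).symm
    _ = derivWithin (fun y => derivWithin (fun s => u s y) I t) J x :=
        (derivWithin_congr (fun y hy => derivWithin_fst_eq_fderivWithin hI hud ht hy)
          (derivWithin_fst_eq_fderivWithin hI hud ht hx)).symm

end PartialDerivatives

theorem integral_sub_integral_eq_of_conservation_law {E : Type*} [NormedAddCommGroup E]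
    [NormedSpace ℝ E] {f g : ℝ × ℝ → E} {a b c d : ℝ}
    (hfc : ContinuousOn f (uIcc a b ×ˢ uIcc c d)) (hgc : ContinuousOn g (uIcc a b ×ˢ uIcc c d))
    (hfd : DifferentiableOn ℝ f (uIoo a b ×ˢ uIoo c d))
    (hgd : DifferentiableOn ℝ g (uIoo a b ×ˢ uIoo c d))
    (hfg : ∀ t ∈ uIoo a b, ∀ x ∈ uIoo c d,
      deriv (fun s => f (s, x)) t = deriv (fun y => g (t, y)) x) :
    (∫ x in c..d, f (b, x)) - ∫ x in c..d, f (a, x)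
      = (∫ t in a..b, g (t, d)) - ∫ t in a..b, g (t, c) := by
  set U := uIoo a b ×ˢ uIoo c d
  have hUopen : IsOpen U := isOpen_Ioo.prod isOpen_Ioo
  have hfd' : ∀ z ∈ U, HasFDerivAt f (fderiv ℝ f z) z := fun z hz =>
    (hfd.differentiableAt (hUopen.mem_nhds hz)).hasFDerivAt
  have hgd' : ∀ z ∈ U, HasFDerivAt g (fderiv ℝ g z) z := fun z hz =>
    (hgd.differentiableAt (hUopen.mem_nhds hz)).hasFDerivAt
  -- Cutting the derivatives off outside `U` makes the divergence vanish on the whole plane.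
  have hzero : ∀ z, U.indicator (fderiv ℝ f) z (1, 0) + -U.indicator (fderiv ℝ g) z (0, 1) = 0 := by
    intro z
    by_cases hz : z ∈ U
    · have hft := (hfd' z hz).comp_hasDerivAt z.1
        ((hasDerivAt_id z.1).prodMk (hasDerivAt_const z.1 z.2))
      have hgx := (hgd' z hz).comp_hasDerivAt z.2
        ((hasDerivAt_const z.2 z.1).prodMk (hasDerivAt_id z.2))
      have hdiv : fderiv ℝ f z (1, 0) = fderiv ℝ g z (0, 1) :=
        hft.deriv.symm.trans ((hfg z.1 hz.1 z.2 hz.2).trans hgx.deriv)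
      simp only [indicator_of_mem hz, hdiv, add_neg_cancel]
    · simp [indicator_of_notMem hz]
  have hdivergence := integral2_divergence_prod_of_hasFDerivAt f (-g)
    (U.indicator (fderiv ℝ f)) (fun z => -U.indicator (fderiv ℝ g) z) a c b d hfc hgc.neg
    (fun z hz => by simpa only [indicator_of_mem (show z ∈ U from hz)] using hfd' z hz)
    (fun z hz => by simpa only [indicator_of_mem (show z ∈ U from hz)] using (hgd' z hz).neg)
    (by simp [hzero])
  simp only [neg_apply, hzero, Pi.neg_apply, intervalIntegral.integral_zero,
    intervalIntegral.integral_neg] at hdivergence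
  rw [← sub_eq_zero, hdivergence]
  abel

/-- First-order form of the wave equation on `I × J`, with displacement `u` and velocity `w`, run
through at the signed speed `σ`: `σ = 1` is the forward and `σ = -1` the time-reversed equation. -/
structure IsWaveSolution (σ : ℝ) (I J : Set ℝ) (u w : ℝ → ℝ → ℝ) : Prop where
  contDiffOn_displacement : ContDiffOn ℝ 2 (Function.uncurry u) (I ×ˢ J)
  contDiffOn_velocity : ContDiffOn ℝ 1 (Function.uncurry w) (I ×ˢ J)
  derivWithin_displacement : ∀ t ∈ I, ∀ x ∈ J, derivWithin (fun s => u s x) I t = σ * w t x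
  derivWithin_velocity : ∀ t ∈ I, ∀ x ∈ J,
    derivWithin (fun s => w s x) I t
      = σ * derivWithin (fun y => derivWithin (u t) J y) J x

/-- Twice the mechanical energy at time `t` of a string occupying `[c, d]`, with displacement `u`
and velocity `w`. -/
noncomputable def stringEnergy (c d : ℝ) (u w : ℝ → ℝ → ℝ) (t : ℝ) : ℝ :=
  ∫ x in c..d, (derivWithin (u t) (Icc c d) x ^ 2 + w t x ^ 2)

namespace IsWaveSolution

variable {σ a b c d : ℝ} {u w : ℝ → ℝ → ℝ}

theorem derivWithin_strain (h : IsWaveSolution σ (Icc a b) (Icc c d) u w) (hab : a < b)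
    (hcd : c < d) {t x : ℝ} (ht : t ∈ Icc a b) (hx : x ∈ Icc c d) :
    derivWithin (fun s => derivWithin (u s) (Icc c d) x) (Icc a b) t
      = σ * derivWithin (w t) (Icc c d) x := by
  rw [derivWithin_derivWithin_comm (uniqueDiffOn_Icc hab) (uniqueDiffOn_Icc hcd)
      h.contDiffOn_displacement ht hx (by rwa [closure_interior_Icc hab.ne])
      (by rwa [closure_interior_Icc hcd.ne]),
    derivWithin_congr (fun y hy => h.derivWithin_displacement t ht y hy)
      (h.derivWithin_displacement t ht x hx),
    derivWithin_const_mul_field]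

theorem contDiffOn_strain (h : IsWaveSolution σ (Icc a b) (Icc c d) u w) (hab : a < b)
    (hcd : c < d) :
    ContDiffOn ℝ 1 (Function.uncurry fun s y => derivWithin (u s) (Icc c d) y)
      (Icc a b ×ˢ Icc c d) :=
  contDiffOn_derivWithin_snd (uniqueDiffOn_Icc hab) (uniqueDiffOn_Icc hcd)
    h.contDiffOn_displacement one_add_one_eq_two.le

theorem deriv_energyDensity_eq_deriv_flux (h : IsWaveSolution σ (Icc a b) (Icc c d) u w)
    (hab : a < b) (hcd : c < d) {t x : ℝ} (ht : t ∈ Ioo a b) (hx : x ∈ Ioo c d) :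
    deriv (fun s => derivWithin (u s) (Icc c d) x ^ 2 + w s x ^ 2) t
      = deriv (fun y => 2 * σ * (w t y * derivWithin (u t) (Icc c d) y)) x := by
  have htI := Ioo_subset_Icc_self ht
  have hxJ := Ioo_subset_Icc_self hx
  have hI : Icc a b ∈ nhds t := Icc_mem_nhds ht.1 ht.2
  have hJ : Icc c d ∈ nhds x := Icc_mem_nhds hx.1 hx.2
  have hp := (h.contDiffOn_strain hab hcd).differentiableOn one_ne_zero (t, x) ⟨htI, hxJ⟩
  have hw := h.contDiffOn_velocity.differentiableOn one_ne_zero (t, x) ⟨htI, hxJ⟩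
  have hpt : HasDerivAt (fun s => derivWithin (u s) (Icc c d) x)
      (σ * derivWithin (w t) (Icc c d) x) t :=
    h.derivWithin_strain hab hcd htI hxJ ▸
      ((hasDerivWithinAt_fst_of_differentiableWithinAt hp hxJ).differentiableWithinAt
        |>.hasDerivWithinAt.hasDerivAt hI)
  have hwt : HasDerivAt (fun s => w s x)
      (σ * derivWithin (fun y => derivWithin (u t) (Icc c d) y) (Icc c d) x) t :=
    h.derivWithin_velocity t htI x hxJ ▸
      ((hasDerivWithinAt_fst_of_differentiableWithinAt hw hxJ).differentiableWithinAt
        |>.hasDerivWithinAt.hasDerivAt hI)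
  have hpx : HasDerivAt (fun y => derivWithin (u t) (Icc c d) y)
      (derivWithin (fun y => derivWithin (u t) (Icc c d) y) (Icc c d) x) x :=
    (hasDerivWithinAt_snd_of_differentiableWithinAt hp htI).differentiableWithinAt
      |>.hasDerivWithinAt.hasDerivAt hJ
  have hwx : HasDerivAt (w t) (derivWithin (w t) (Icc c d) x) x :=
    (hasDerivWithinAt_snd_of_differentiableWithinAt hw htI).differentiableWithinAt
      |>.hasDerivWithinAt.hasDerivAt hJ
  rw [((hpt.fun_pow 2).fun_add (hwt.fun_pow 2)).deriv,
    ((hwx.fun_mul hpx).const_mul (2 * σ)).deriv]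
  ring

theorem stringEnergy_sub_stringEnergy (h : IsWaveSolution σ (Icc a b) (Icc c d) u w)
    (hab : a < b) (hcd : c < d) {t₀ t₁ : ℝ} (ht₀ : t₀ ∈ Icc a b) (ht₁ : t₁ ∈ Icc a b) :
    stringEnergy c d u w t₁ - stringEnergy c d u w t₀
      = (∫ s in t₀..t₁, 2 * σ * (w s d * derivWithin (u s) (Icc c d) d))
        - ∫ s in t₀..t₁, 2 * σ * (w s c * derivWithin (u s) (Icc c d) c) := by
  have hpc := h.contDiffOn_strain hab hcd
  have he : ContDiffOn ℝ 1
      (fun z : ℝ × ℝ => derivWithin (u z.1) (Icc c d) z.2 ^ 2 + w z.1 z.2 ^ 2)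
      (Icc a b ×ˢ Icc c d) := (hpc.pow 2).add (h.contDiffOn_velocity.pow 2)
  have hq : ContDiffOn ℝ 1
      (fun z : ℝ × ℝ => 2 * σ * (w z.1 z.2 * derivWithin (u z.1) (Icc c d) z.2))
      (Icc a b ×ˢ Icc c d) := contDiffOn_const.mul (h.contDiffOn_velocity.mul hpc)
  have hclosed : uIcc t₀ t₁ ×ˢ uIcc c d ⊆ Icc a b ×ˢ Icc c d :=
    Set.prod_mono (uIcc_subset_Icc ht₀ ht₁) (uIcc_of_le hcd.le).subset
  have hopen : uIoo t₀ t₁ ×ˢ uIoo c d ⊆ Icc a b ×ˢ Icc c d :=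
    (Set.prod_mono uIoo_subset_uIcc_self uIoo_subset_uIcc_self).trans hclosed
  refine integral_sub_integral_eq_of_conservation_law (he.continuousOn.mono hclosed)
    (hq.continuousOn.mono hclosed) ((he.differentiableOn one_ne_zero).mono hopen)
    ((hq.differentiableOn one_ne_zero).mono hopen) fun t ht x hx => ?_
  exact h.deriv_energyDensity_eq_deriv_flux hab hcd (uIoo_subset_Ioo ht₀ ht₁ ht)
    (uIoo_of_lt hcd ▸ hx)

end IsWaveSolution

theorem oscillator_energy_balance {σ ω γ a b : ℝ} {ξ₁ ξ₂ F : ℝ → ℝ}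
    (h₁ : ∀ t ∈ uIcc a b, HasDerivWithinAt ξ₁ (σ * ξ₂ t - γ * ξ₁ t) (uIcc a b) t)
    (h₂ : ∀ t ∈ uIcc a b,
      HasDerivWithinAt ξ₂ (σ * (-ω ^ 2 * ξ₁ t + F t)) (uIcc a b) t)
    (hF : ContinuousOn F (uIcc a b)) :
    (ξ₂ b ^ 2 + ω ^ 2 * ξ₁ b ^ 2) - (ξ₂ a ^ 2 + ω ^ 2 * ξ₁ a ^ 2)
      = (∫ t in a..b, 2 * σ * (F t * ξ₂ t)) - 2 * γ * ω ^ 2 * ∫ t in a..b, ξ₁ t ^ 2 := by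
  have hξ₁ : ContinuousOn ξ₁ (uIcc a b) := fun t ht => (h₁ t ht).continuousWithinAt
  have hξ₂ : ContinuousOn ξ₂ (uIcc a b) := fun t ht => (h₂ t ht).continuousWithinAt
  have hpower : IntervalIntegrable (fun t => 2 * σ * (F t * ξ₂ t)) volume a b :=
    ContinuousOn.intervalIntegrable (by fun_prop)
  have hdamping : IntervalIntegrable (fun t => 2 * γ * ω ^ 2 * ξ₁ t ^ 2) volume a b :=
    ContinuousOn.intervalIntegrable (by fun_prop)
  rw [← intervalIntegral.integral_const_mul, ← intervalIntegral.integral_sub hpower hdamping]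
  refine (integral_eq_sub_of_hasDeriv_right (f := fun t => ξ₂ t ^ 2 + ω ^ 2 * ξ₁ t ^ 2)
    (by fun_prop) (fun t ht => ?_) (hpower.sub hdamping)).symm
  have ht' : t ∈ uIcc a b := uIoo_subset_uIcc_self ht
  refine ((((h₂ t ht').fun_pow 2).fun_add (((h₁ t ht').fun_pow 2).const_mul (ω ^ 2))).hasDerivAt
    (Icc_mem_nhds ht.1 ht.2)).hasDerivWithinAt.congr_deriv ?_
  ring

/-- A string on `[0, 1]`, fixed at `x = 1` and attached at `x = 0` to a damped oscillator
`(ξ₁, ξ₂)`, over the time set `I`. As in `IsWaveSolution`, `σ` is the signed speed at which time is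
run through; the damping `-γ₂ξ₁` and the integrator `ξ₃` do not see it. -/
structure IsStringOscillatorSolution (σ ω γ₁ γ₂ : ℝ) (I : Set ℝ) (u w : ℝ → ℝ → ℝ)
    (ξ₁ ξ₂ ξ₃ : ℝ → ℝ) : Prop extends IsWaveSolution σ I (Icc 0 1) u w where
  contDiffOn_ξ₁ : ContDiffOn ℝ 1 ξ₁ I
  contDiffOn_ξ₂ : ContDiffOn ℝ 1 ξ₂ I
  contDiffOn_ξ₃ : ContDiffOn ℝ 1 ξ₃ I
  derivWithin_ξ₁ : ∀ t ∈ I, derivWithin ξ₁ I t = σ * ξ₂ t - γ₂ * ξ₁ t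
  derivWithin_ξ₂ : ∀ t ∈ I,
    derivWithin ξ₂ I t = σ * (-ω ^ 2 * ξ₁ t + derivWithin (u t) (Icc 0 1) 0)
  derivWithin_ξ₃ : ∀ t ∈ I, derivWithin ξ₃ I t = ξ₁ t
  displacement_one : ∀ t ∈ I, u t 1 = 0
  displacement_zero : ∀ t ∈ I, u t 0 = γ₁ * ξ₁ t + γ₁ * γ₂ * ξ₃ t

/-- Twice the mechanical energy at time `t` of a string on `[0, 1]` coupled to an oscillator of
frequency `ω` through the gain `γ₁`. -/
noncomputable def coupledEnergy (ω γ₁ : ℝ) (u w : ℝ → ℝ → ℝ) (ξ₁ ξ₂ : ℝ → ℝ) (t : ℝ) : ℝ :=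
  stringEnergy 0 1 u w t + γ₁ * ξ₂ t ^ 2 + γ₁ * ω ^ 2 * ξ₁ t ^ 2

namespace IsStringOscillatorSolution

section Boundary

variable {σ ω γ₁ γ₂ : ℝ} {I : Set ℝ} {u w : ℝ → ℝ → ℝ} {ξ₁ ξ₂ ξ₃ : ℝ → ℝ}

theorem hasDerivWithinAt_ξ₁ (h : IsStringOscillatorSolution σ ω γ₁ γ₂ I u w ξ₁ ξ₂ ξ₃) {t : ℝ}
    (ht : t ∈ I) : HasDerivWithinAt ξ₁ (σ * ξ₂ t - γ₂ * ξ₁ t) I t :=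
  h.derivWithin_ξ₁ t ht ▸ (h.contDiffOn_ξ₁.differentiableOn one_ne_zero t ht).hasDerivWithinAt

theorem hasDerivWithinAt_ξ₂ (h : IsStringOscillatorSolution σ ω γ₁ γ₂ I u w ξ₁ ξ₂ ξ₃) {t : ℝ}
    (ht : t ∈ I) :
    HasDerivWithinAt ξ₂ (σ * (-ω ^ 2 * ξ₁ t + derivWithin (u t) (Icc 0 1) 0)) I t :=
  h.derivWithin_ξ₂ t ht ▸ (h.contDiffOn_ξ₂.differentiableOn one_ne_zero t ht).hasDerivWithinAt

theorem hasDerivWithinAt_ξ₃ (h : IsStringOscillatorSolution σ ω γ₁ γ₂ I u w ξ₁ ξ₂ ξ₃) {t : ℝ}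
    (ht : t ∈ I) : HasDerivWithinAt ξ₃ (ξ₁ t) I t :=
  h.derivWithin_ξ₃ t ht ▸ (h.contDiffOn_ξ₃.differentiableOn one_ne_zero t ht).hasDerivWithinAt

theorem velocity_one (h : IsStringOscillatorSolution σ ω γ₁ γ₂ I u w ξ₁ ξ₂ ξ₃) (hσ : σ ≠ 0)
    {t : ℝ} (ht : t ∈ I) : w t 1 = 0 := by
  refine (mul_eq_zero.mp ?_).resolve_left hσ
  rw [← h.derivWithin_displacement t ht 1 (right_mem_Icc.2 zero_le_one),
    derivWithin_congr h.displacement_one (h.displacement_one t ht), derivWithin_fun_const,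
    Pi.zero_apply]

theorem velocity_zero (h : IsStringOscillatorSolution σ ω γ₁ γ₂ I u w ξ₁ ξ₂ ξ₃) (hσ : σ ≠ 0)
    (hI : UniqueDiffOn ℝ I) {t : ℝ} (ht : t ∈ I) : w t 0 = γ₁ * ξ₂ t := by
  refine mul_left_cancel₀ hσ ?_
  calc σ * w t 0 = derivWithin (fun s => u s 0) I t :=
        (h.derivWithin_displacement t ht 0 (left_mem_Icc.2 zero_le_one)).symm
    _ = derivWithin (fun s => γ₁ * ξ₁ s + γ₁ * γ₂ * ξ₃ s) I t :=
        derivWithin_congr h.displacement_zero (h.displacement_zero t ht)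
    _ = γ₁ * (σ * ξ₂ t - γ₂ * ξ₁ t) + γ₁ * γ₂ * ξ₁ t :=
        (((h.hasDerivWithinAt_ξ₁ ht).const_mul γ₁).fun_add
          ((h.hasDerivWithinAt_ξ₃ ht).const_mul (γ₁ * γ₂))).derivWithin (hI t ht)
    _ = σ * (γ₁ * ξ₂ t) := by ring

end Boundary

variable {σ ω γ₁ γ₂ a b : ℝ} {u w : ℝ → ℝ → ℝ} {ξ₁ ξ₂ ξ₃ : ℝ → ℝ}

theorem stringEnergy_sub_stringEnergy
    (h : IsStringOscillatorSolution σ ω γ₁ γ₂ (Icc a b) u w ξ₁ ξ₂ ξ₃) (hσ : σ ≠ 0) (hab : a < b)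
    {t₀ t₁ : ℝ} (ht₀ : t₀ ∈ Icc a b) (ht₁ : t₁ ∈ Icc a b) :
    stringEnergy 0 1 u w t₁ - stringEnergy 0 1 u w t₀
      = -(γ₁ * ∫ s in t₀..t₁, 2 * σ * (derivWithin (u s) (Icc 0 1) 0 * ξ₂ s)) := by
  have hsub : uIcc t₀ t₁ ⊆ Icc a b := uIcc_subset_Icc ht₀ ht₁
  have hfixed : ∫ s in t₀..t₁, 2 * σ * (w s 1 * derivWithin (u s) (Icc 0 1) 1) = 0 :=
    intervalIntegral.integral_zero_ae (.of_forall fun s hs => by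
      rw [h.velocity_one hσ (hsub (uIoc_subset_uIcc hs)), zero_mul, mul_zero])
  have hattached : ∫ s in t₀..t₁, 2 * σ * (w s 0 * derivWithin (u s) (Icc 0 1) 0)
      = γ₁ * ∫ s in t₀..t₁, 2 * σ * (derivWithin (u s) (Icc 0 1) 0 * ξ₂ s) := by
    rw [← intervalIntegral.integral_const_mul]
    refine integral_congr fun s hs => ?_
    simp only [h.velocity_zero hσ (uniqueDiffOn_Icc hab) (hsub hs)]
    ring
  rw [h.toIsWaveSolution.stringEnergy_sub_stringEnergy hab one_pos ht₀ ht₁, hfixed, hattached,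
    zero_sub]

theorem coupledEnergy_add_integral_eq
    (h : IsStringOscillatorSolution σ ω γ₁ γ₂ (Icc a b) u w ξ₁ ξ₂ ξ₃) (hσ : σ ≠ 0) (hab : a < b)
    {t₀ t₁ : ℝ} (ht₀ : t₀ ∈ Icc a b) (ht₁ : t₁ ∈ Icc a b) :
    coupledEnergy ω γ₁ u w ξ₁ ξ₂ t₁ + 2 * γ₁ * γ₂ * ω ^ 2 * ∫ s in t₀..t₁, ξ₁ s ^ 2
      = coupledEnergy ω γ₁ u w ξ₁ ξ₂ t₀ := by
  have hsub : uIcc t₀ t₁ ⊆ Icc a b := uIcc_subset_Icc ht₀ ht₁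
  have hforce : ContinuousOn (fun s => derivWithin (u s) (Icc 0 1) 0) (uIcc t₀ t₁) :=
    (h.contDiffOn_strain hab one_pos).continuousOn.comp (f := fun s => (s, (0 : ℝ)))
      (by fun_prop) fun s hs => ⟨hsub hs, left_mem_Icc.2 zero_le_one⟩
  have hstring := h.stringEnergy_sub_stringEnergy hσ hab ht₀ ht₁
  have hoscillator := oscillator_energy_balance
    (fun t ht => (h.hasDerivWithinAt_ξ₁ (hsub ht)).mono hsub)
    (fun t ht => (h.hasDerivWithinAt_ξ₂ (hsub ht)).mono hsub) hforce
  unfold coupledEnergy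
  linear_combination hstring + γ₁ * hoscillator

end IsStringOscillatorSolution

theorem eq_apply_zero_of_eq_on_strips {α : Type*} {f : ℝ → α} {T : ℝ} (hT : 0 < T)
    (hf : ∀ n : ℕ, ∀ t ∈ Icc (n * T) ((n + 1) * T), f t = f (n * T)) {t : ℝ} (ht : 0 ≤ t) :
    f t = f 0 := by
  have hnode : ∀ n : ℕ, f (n * T) = f 0 := by
    intro n
    induction n with
    | zero => simp
    | succ n ih =>
      rw [← ih, Nat.cast_succ]
      exact hf n _ ⟨by gcongr; simp, le_rfl⟩
  have hquot : 0 ≤ t / T := div_nonneg ht hT.le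
  rw [← hnode ⌊t / T⌋₊]
  exact hf _ t ⟨(le_div_iff₀ hT).1 (Nat.floor_le hquot),
    ((div_lt_iff₀ hT).1 (Nat.lt_floor_add_one _)).le⟩

namespace BackAndForthSol

variable {T ω γ₁ γ₂ : ℝ}

theorem isStringOscillatorSolution_forward (S : BackAndForthSol T ω γ₁ γ₂) (hT : 0 ≤ T) (k : ℕ) :
    IsStringOscillatorSolution 1 ω γ₁ γ₂ (Icc (2 * k * T) ((2 * k + 1) * T))
      S.v1 S.v2 S.ξ1 S.ξ2 S.ξ3 where
  contDiffOn_displacement := S.smooth_v1_fwd k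
  contDiffOn_velocity := (S.smooth_v2_fwd k).of_le one_le_two
  derivWithin_displacement := by simpa only [one_mul] using S.pde1_fwd k
  derivWithin_velocity := by simpa only [one_mul] using S.pde2_fwd k
  contDiffOn_ξ₁ := S.smooth_ξ1_fwd k
  contDiffOn_ξ₂ := S.smooth_ξ2_fwd k
  contDiffOn_ξ₃ := S.smooth_ξ3_fwd k
  derivWithin_ξ₁ := by simpa only [one_mul] using S.ode1_fwd k
  derivWithin_ξ₂ := by simpa only [one_mul] using S.ode2_fwd k
  derivWithin_ξ₃ := S.ode3_fwd k
  displacement_one t ht := S.bc1 t ((by positivity : 0 ≤ 2 * k * T).trans ht.1)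
  displacement_zero t ht := S.bc0 t ((by positivity : 0 ≤ 2 * k * T).trans ht.1)

theorem isStringOscillatorSolution_backward (S : BackAndForthSol T ω γ₁ γ₂) (hT : 0 ≤ T) (k : ℕ) :
    IsStringOscillatorSolution (-1) ω γ₁ γ₂ (Icc ((2 * k + 1) * T) ((2 * k + 2) * T))
      S.v1 S.v2 S.ξ1 S.ξ2 S.ξ3 where
  contDiffOn_displacement := S.smooth_v1_bwd k
  contDiffOn_velocity := (S.smooth_v2_bwd k).of_le one_le_two
  derivWithin_displacement := by simpa only [neg_one_mul] using S.pde1_bwd k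
  derivWithin_velocity := by simpa only [neg_one_mul] using S.pde2_bwd k
  contDiffOn_ξ₁ := S.smooth_ξ1_bwd k
  contDiffOn_ξ₂ := S.smooth_ξ2_bwd k
  contDiffOn_ξ₃ := S.smooth_ξ3_bwd k
  derivWithin_ξ₁ := by simpa only [neg_one_mul] using S.ode1_bwd k
  derivWithin_ξ₂ t ht := (S.ode2_bwd k t ht).trans (by ring)
  derivWithin_ξ₃ := S.ode3_bwd k
  displacement_one t ht := S.bc1 t ((by positivity : 0 ≤ (2 * k + 1) * T).trans ht.1)
  displacement_zero t ht := S.bc0 t ((by positivity : 0 ≤ (2 * k + 1) * T).trans ht.1)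

theorem exists_isStringOscillatorSolution_strip (S : BackAndForthSol T ω γ₁ γ₂) (hT : 0 ≤ T)
    (n : ℕ) :
    ∃ σ : ℝ, σ ≠ 0 ∧ IsStringOscillatorSolution σ ω γ₁ γ₂ (Icc (n * T) ((n + 1) * T))
      S.v1 S.v2 S.ξ1 S.ξ2 S.ξ3 := by
  obtain ⟨k, rfl | rfl⟩ := n.even_or_odd'
  · exact ⟨1, one_ne_zero, by exact_mod_cast S.isStringOscillatorSolution_forward hT k⟩
  · refine ⟨-1, by norm_num, ?_⟩
    have hend : ((2 * k + 1 : ℕ) + 1 : ℝ) = 2 * k + 2 := by push_cast; ring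
    rw [hend]
    exact_mod_cast S.isStringOscillatorSolution_backward hT k

theorem intervalIntegrable_ξ1_sq (S : BackAndForthSol T ω γ₁ γ₂) {a b : ℝ} (ha : 0 ≤ a)
    (hb : 0 ≤ b) : IntervalIntegrable (fun s => S.ξ1 s ^ 2) volume a b :=
  ((S.cont_ξ1.pow 2).mono fun _ hs => (le_inf ha hb).trans hs.1).intervalIntegrable

end BackAndForthSol

theorem back_and_forth_energy_identity_general {T ω γ₁ γ₂ : ℝ} (hT : 0 < T)
    (S : BackAndForthSol T ω γ₁ γ₂) {t : ℝ} (ht : 0 ≤ t) :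
    coupledEnergy ω γ₁ S.v1 S.v2 S.ξ1 S.ξ2 t + 2 * γ₁ * γ₂ * ω ^ 2 * ∫ s in 0..t, S.ξ1 s ^ 2
      = coupledEnergy ω γ₁ S.v1 S.v2 S.ξ1 S.ξ2 0 := by
  have hstrips := eq_apply_zero_of_eq_on_strips hT (f := fun t =>
    coupledEnergy ω γ₁ S.v1 S.v2 S.ξ1 S.ξ2 t + 2 * γ₁ * γ₂ * ω ^ 2 * ∫ s in 0..t, S.ξ1 s ^ 2)
    (fun n t ht => ?_) ht
  · simpa only [integral_same, mul_zero, add_zero] using hstrips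
  · have hn : 0 ≤ n * T := by positivity
    obtain ⟨σ, hσ, h⟩ := S.exists_isStringOscillatorSolution_strip hT.le n
    have hbalance := h.coupledEnergy_add_integral_eq hσ (by linarith)
      (left_mem_Icc.2 (by linarith)) ht
    rw [← integral_add_adjacent_intervals (S.intervalIntegrable_ξ1_sq le_rfl hn)
      (S.intervalIntegrable_ξ1_sq hn (hn.trans ht.1))]
    linear_combination hbalance

/-- global-in-time energy identity (26) for the back-and-forth
dynamics: for every `t ≥ 0`,
`∫₀¹(|∂ₓv¹(t)|² + |v²(t)|²)dx + γ₁ξ₂(t)² + γ₁ω²ξ₁(t)² + 2γ₁γ₂ω²∫₀ᵗξ₁²`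
equals the initial energy `∫₀¹(|∂ₓv¹(0)|² + |v²(0)|²)dx + γ₁ξ₂(0)² + γ₁ω²ξ₁(0)²`. -/
theorem back_and_forth_energy_identity
    (T ω γ₁ γ₂ : ℝ) (hT : 0 < T) (hγ₁ : 0 < γ₁) (hγ₂ : 0 < γ₂)
    (S : BackAndForthSol T ω γ₁ γ₂) :
    ∀ t ∈ Ici (0:ℝ),
      (∫ x in (0:ℝ)..1,
          ((derivWithin (fun y => S.v1 t y) (Icc (0:ℝ) 1) x) ^ 2 + (S.v2 t x) ^ 2))
        + γ₁ * (S.ξ2 t) ^ 2 + γ₁ * ω ^ 2 * (S.ξ1 t) ^ 2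
        + 2 * γ₁ * γ₂ * ω ^ 2 * ∫ s in (0:ℝ)..t, (S.ξ1 s) ^ 2
      = (∫ x in (0:ℝ)..1,
          ((derivWithin (fun y => S.v1 0 y) (Icc (0:ℝ) 1) x) ^ 2 + (S.v2 0 x) ^ 2))
        + γ₁ * (S.ξ2 0) ^ 2 + γ₁ * ω ^ 2 * (S.ξ1 0) ^ 2 :=
  fun _ ht => back_and_forth_energy_identity_general hT S ht
end

section
/- Let (v¹, v², ξ₁, ξ₂, ξ₃) be a classical solution of the forward coupled observer system on [0,T], with v¹ and v² additionally of class C³. Then for every t ∈ [0,T]: (d/dt)[ (1/2)·( ∫₀¹ (|∂ₜv²(t,x)|² + |∂ₓv²(t,x)|²) dx + γ₁·|∂ₓv¹(t,0)|² ) ] = γ₁ω² · ∂ₓv²(t,0) · ξ₁(t). (This is the differentiated second-order energy identity used in Step 2 of the proof of the energy estimates.) -/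
/-!
Two spatial derivatives of `v¹(t,x) = v¹(0,x) + ∫₀ᵗ v²(s,x) ds` can be taken under the integral,
because `v²` is `C²`. Thus `∂ₜ∂ₓₓv¹ = ∂ₓₓv²`, so that `v²` solves the wave equation as well, and
`∂ₜ((∂ₜv²)² + (∂ₓv²)²) = 2 ∂ₓ(∂ₜv² ∂ₓv²)`. Integrating over `[0,1]` leaves the flux `∂ₜv² ∂ₓv²` at
the two ends. It vanishes at `x = 1`, where `v² = 0`; at `x = 0` the boundary condition and the
observer equations give `v² = γ₁ξ₂`, hence `∂ₜv² = γ₁(-ω²ξ₁ + ∂ₓv¹)`, and the part of the flux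
containing `∂ₓv¹` is cancelled by the derivative of `γ₁|∂ₓv¹(t,0)|²`.
-/

open Set Filter MeasureTheory intervalIntegral

/-- A classical solution of the forward coupled observer system on `[0,T]`:
`∂ₜv¹ = v²`, `∂ₜv² = ∂ₓₓv¹` on `[0,T] × [0,1]`, boundary conditions `v¹(t,1) = 0`,
`v¹(t,0) = γ₁ξ₁(t) + γ₁γ₂ξ₃(t)`, and the observer ODEs `ξ₁' = ξ₂ − γ₂ξ₁`,
`ξ₂' = −ω²ξ₁ + ∂ₓv¹(·,0)`, `ξ₃' = ξ₁` on `[0,T]`. -/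
structure FwdObserverSol (T ω γ₁ γ₂ : ℝ) where
  v1 : ℝ → ℝ → ℝ
  v2 : ℝ → ℝ → ℝ
  ξ1 : ℝ → ℝ
  ξ2 : ℝ → ℝ
  ξ3 : ℝ → ℝ
  smooth_v1 : ContDiff ℝ 2 (Function.uncurry v1)
  smooth_v2 : ContDiff ℝ 2 (Function.uncurry v2)
  smooth_ξ1 : ContDiff ℝ 1 ξ1
  smooth_ξ2 : ContDiff ℝ 1 ξ2
  smooth_ξ3 : ContDiff ℝ 1 ξ3
  pde1 : ∀ t ∈ Icc (0:ℝ) T, ∀ x ∈ Icc (0:ℝ) 1, deriv (fun s => v1 s x) t = v2 t x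
  pde2 : ∀ t ∈ Icc (0:ℝ) T, ∀ x ∈ Icc (0:ℝ) 1,
    deriv (fun s => v2 s x) t = deriv (deriv (fun y => v1 t y)) x
  bc1 : ∀ t ∈ Icc (0:ℝ) T, v1 t 1 = 0
  bc0 : ∀ t ∈ Icc (0:ℝ) T, v1 t 0 = γ₁ * ξ1 t + γ₁ * γ₂ * ξ3 t
  ode1 : ∀ t ∈ Icc (0:ℝ) T, deriv ξ1 t = ξ2 t - γ₂ * ξ1 t
  ode2 : ∀ t ∈ Icc (0:ℝ) T, deriv ξ2 t = -ω ^ 2 * ξ1 t + deriv (fun y => v1 t y) 0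
  ode3 : ∀ t ∈ Icc (0:ℝ) T, deriv ξ3 t = ξ1 t

open Function

/-- The partial derivative `∂ₜf` of a function of `(t, x)` in its first variable; like `deriv`, it
is `0` where this derivative does not exist. -/
noncomputable def derivFst {F : Type*} [NormedAddCommGroup F] [NormedSpace ℝ F]
    (f : ℝ → ℝ → F) (t x : ℝ) : F :=
  deriv (fun s => f s x) t

/-- The partial derivative `∂ₓf` of a function of `(t, x)` in its second variable; like `deriv`, it
is `0` where this derivative does not exist. -/
noncomputable def derivSnd {F : Type*} [NormedAddCommGroup F] [NormedSpace ℝ F]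
    (f : ℝ → ℝ → F) (t x : ℝ) : F :=
  deriv (fun y => f t y) x

section PartialDerivatives

variable {F : Type*} [NormedAddCommGroup F] [NormedSpace ℝ F] {f g : ℝ → ℝ → F}

lemma hasDerivAt_derivFst (hf : Differentiable ℝ (uncurry f)) (t x : ℝ) :
    HasDerivAt (fun s => f s x) (derivFst f t x) t :=
  (hf.comp (by fun_prop : Differentiable ℝ fun s : ℝ => (s, x)) t).hasDerivAt

lemma hasDerivAt_derivSnd (hf : Differentiable ℝ (uncurry f)) (t x : ℝ) :
    HasDerivAt (fun y => f t y) (derivSnd f t x) x :=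
  (hf.comp (by fun_prop : Differentiable ℝ fun y : ℝ => (t, y)) x).hasDerivAt

lemma uncurry_derivFst (hf : Differentiable ℝ (uncurry f)) :
    uncurry (derivFst f) = fun p => fderiv ℝ (uncurry f) p (1, 0) :=
  funext fun p => ((hf p).hasFDerivAt.comp_hasDerivAt (f := fun s => (s, p.2)) p.1
    ((hasDerivAt_id p.1).prodMk (hasDerivAt_const p.1 p.2))).deriv

lemma uncurry_derivSnd (hf : Differentiable ℝ (uncurry f)) :
    uncurry (derivSnd f) = fun p => fderiv ℝ (uncurry f) p (0, 1) :=
  funext fun p => ((hf p).hasFDerivAt.comp_hasDerivAt (f := fun y => (p.1, y)) p.2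
    ((hasDerivAt_const p.2 p.1).prodMk (hasDerivAt_id p.2))).deriv

lemma contDiff_uncurry_derivFst {m n : WithTop ℕ∞} (hf : ContDiff ℝ n (uncurry f))
    (hmn : m + 1 ≤ n) : ContDiff ℝ m (uncurry (derivFst f)) := by
  rw [uncurry_derivFst ((hf.of_le hmn).differentiable (by simp))]
  exact (hf.fderiv_right hmn).clm_apply contDiff_const

lemma contDiff_uncurry_derivSnd {m n : WithTop ℕ∞} (hf : ContDiff ℝ n (uncurry f))
    (hmn : m + 1 ≤ n) : ContDiff ℝ m (uncurry (derivSnd f)) := by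
  rw [uncurry_derivSnd ((hf.of_le hmn).differentiable (by simp))]
  exact (hf.fderiv_right hmn).clm_apply contDiff_const

lemma continuous_derivFst_apply (hf : ContDiff ℝ 1 (uncurry f)) (t : ℝ) :
    Continuous (derivFst f t) :=
  (contDiff_uncurry_derivFst (m := 0) hf (by simp)).continuous.uncurry_left t

lemma continuous_derivSnd_apply (hf : ContDiff ℝ 1 (uncurry f)) (t : ℝ) :
    Continuous (derivSnd f t) :=
  (contDiff_uncurry_derivSnd (m := 0) hf (by simp)).continuous.uncurry_left t

lemma hasDerivAt_intervalIntegral_derivFst (hf : ContDiff ℝ 1 (uncurry f)) (a b t : ℝ) :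
    HasDerivAt (fun s => ∫ x in a..b, f s x) (∫ x in a..b, derivFst f t x) t := by
  have hf' : Continuous (uncurry (derivFst f)) :=
    (contDiff_uncurry_derivFst (m := 0) hf (by simp)).continuous
  obtain ⟨C, hC⟩ := ((isCompact_Icc (a := t - 1) (b := t + 1)).prod
    (isCompact_uIcc (a := a) (b := b))).exists_bound_of_continuousOn hf'.continuousOn
  have hfs (s : ℝ) : Continuous (f s) := hf.continuous.uncurry_left s
  exact (hasDerivAt_integral_of_dominated_loc_of_deriv_le (bound := fun _ => C)
    (Icc_mem_nhds (sub_one_lt t) (lt_add_one t))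
    (.of_forall fun s => (hfs s).aestronglyMeasurable)
    ((hfs t).intervalIntegrable a b) (continuous_derivFst_apply hf t).aestronglyMeasurable
    (.of_forall fun x hx s hs => hC (s, x) ⟨hs, uIoc_subset_uIcc hx⟩) intervalIntegrable_const
    (.of_forall fun x _ s _ => hasDerivAt_derivFst (hf.differentiable (by simp)) s x)).2

lemma hasDerivAt_intervalIntegral_derivSnd (hf : ContDiff ℝ 1 (uncurry f)) (a b x : ℝ) :
    HasDerivAt (fun y => ∫ s in a..b, f s y) (∫ s in a..b, derivSnd f s x) x :=
  hasDerivAt_intervalIntegral_derivFst (f := fun y s => f s y)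
    (hf.comp (contDiff_snd.prodMk contDiff_fst)) a b x

lemma hasDerivWithinAt_Icc_unique_of_eqOn {u v : ℝ → F} {u' v' : F} {a b t : ℝ} (hab : a < b)
    (ht : t ∈ Icc a b) (hu : HasDerivWithinAt u u' (Icc a b) t)
    (hv : HasDerivWithinAt v v' (Icc a b) t) (huv : EqOn u v (Icc a b)) : u' = v' :=
  (uniqueDiffOn_Icc hab t ht).eq_deriv _ hu (hv.congr_of_mem huv ht)

section MixedPartials

variable [CompleteSpace F] {a b c d t x : ℝ}

lemma derivSnd_eq_add_integral_of_hasDerivWithinAt (hcd : c < d)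
    (hf : Differentiable ℝ (uncurry f)) (hg : ContDiff ℝ 1 (uncurry g))
    (hfg : ∀ t ∈ Icc a b, ∀ x ∈ Icc c d, HasDerivWithinAt (fun s => f s x) (g t x) (Icc a b) t)
    (ht : t ∈ Icc a b) (hx : x ∈ Icc c d) :
    derivSnd f t x = derivSnd f a x + ∫ s in a..t, derivSnd g s x := by
  have hftc (y : ℝ) (hy : y ∈ Icc c d) : f t y = f a y + ∫ s in a..t, g s y := by
    have hsub : Icc a t ⊆ Icc a b := Icc_subset_Icc_right ht.2
    rw [integral_eq_sub_of_hasDerivAt_of_le ht.1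
      (fun s hs => ((hfg s (hsub hs) y hy).mono hsub).continuousWithinAt)
      (fun s hs => (hfg s (hsub (Ioo_subset_Icc_self hs)) y hy).hasDerivAt
        (Icc_mem_nhds hs.1 (hs.2.trans_le ht.2)))
      ((hg.continuous.uncurry_right y).intervalIntegrable a t), add_sub_cancel]
  exact hasDerivWithinAt_Icc_unique_of_eqOn hcd hx (hasDerivAt_derivSnd hf t x).hasDerivWithinAt
    ((hasDerivAt_derivSnd hf a x).add
      (hasDerivAt_intervalIntegral_derivSnd hg a t x)).hasDerivWithinAt hftc

lemma hasDerivWithinAt_derivSnd (hcd : c < d)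
    (hf : Differentiable ℝ (uncurry f)) (hg : ContDiff ℝ 1 (uncurry g))
    (hfg : ∀ t ∈ Icc a b, ∀ x ∈ Icc c d, HasDerivWithinAt (fun s => f s x) (g t x) (Icc a b) t)
    (ht : t ∈ Icc a b) (hx : x ∈ Icc c d) :
    HasDerivWithinAt (fun s => derivSnd f s x) (derivSnd g t x) (Icc a b) t := by
  have hg' : Continuous fun s => derivSnd g s x :=
    (contDiff_uncurry_derivSnd (m := 0) hg (by simp)).continuous.uncurry_right x
  exact ((hg'.integral_hasStrictDerivAt a t).hasDerivAt.const_add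
    (derivSnd f a x)).hasDerivWithinAt.congr_of_mem
    (fun s hs => derivSnd_eq_add_integral_of_hasDerivWithinAt hcd hf hg hfg hs hx) ht

lemma derivFst_derivSnd_comm (hf : Differentiable ℝ (uncurry f))
    (hf' : ContDiff ℝ 1 (uncurry (derivFst f))) (t x : ℝ) :
    derivFst (derivSnd f) t x = derivSnd (derivFst f) t x :=
  ((hasDerivWithinAt_derivSnd (lt_add_one x) hf hf'
    (fun s _ y _ => (hasDerivAt_derivFst hf s y).hasDerivWithinAt)
    ⟨(sub_one_lt t).le, (lt_add_one t).le⟩ ⟨le_rfl, (lt_add_one x).le⟩).hasDerivAt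
    (Icc_mem_nhds (sub_one_lt t) (lt_add_one t))).deriv

end MixedPartials

end PartialDerivatives

/-- Twice the energy density of a solution `w` of the wave equation. The factor `1 / 2` is left to
the energy, as in `FwdObserverSol.secondOrderEnergy`. -/
noncomputable def waveEnergyDensity (w : ℝ → ℝ → ℝ) (t x : ℝ) : ℝ :=
  derivFst w t x ^ 2 + derivSnd w t x ^ 2

/-- The energy flux `∂ₜw ∂ₓw` of a solution `w` of the wave equation, with the sign for which the
time derivative of the energy density is `+∂ₓ` of the flux. -/
noncomputable def waveEnergyFlux (w : ℝ → ℝ → ℝ) (t x : ℝ) : ℝ :=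
  derivFst w t x * derivSnd w t x

section WaveEnergy

variable {w : ℝ → ℝ → ℝ} {a b t x : ℝ}

lemma derivFst_waveEnergyDensity (hw : ContDiff ℝ 2 (uncurry w))
    (hwave : derivFst (derivFst w) t x = derivSnd (derivSnd w) t x) :
    derivFst (waveEnergyDensity w) t x = 2 * derivSnd (waveEnergyFlux w) t x := by
  have hw₁ : ContDiff ℝ 1 (uncurry (derivFst w)) := contDiff_uncurry_derivFst hw (by norm_num)
  have hdw₁ := hw₁.differentiable one_ne_zero
  have hdw₂ : Differentiable ℝ (uncurry (derivSnd w)) :=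
    (contDiff_uncurry_derivSnd (m := 1) hw (by norm_num)).differentiable one_ne_zero
  have hdensity : derivFst (waveEnergyDensity w) t x = _ :=
    (((hasDerivAt_derivFst hdw₁ t x).pow 2).add ((hasDerivAt_derivFst hdw₂ t x).pow 2)).deriv
  have hflux : derivSnd (waveEnergyFlux w) t x = _ :=
    ((hasDerivAt_derivSnd hdw₁ t x).mul (hasDerivAt_derivSnd hdw₂ t x)).deriv
  rw [hdensity, hflux, hwave, derivFst_derivSnd_comm (hw.differentiable two_ne_zero) hw₁]
  ring

lemma hasDerivAt_integral_waveEnergyDensity (hw : ContDiff ℝ 2 (uncurry w))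
    (hwave : ∀ x ∈ uIcc a b, derivFst (derivFst w) t x = derivSnd (derivSnd w) t x) :
    HasDerivAt (fun s => ∫ x in a..b, waveEnergyDensity w s x)
      (2 * (waveEnergyFlux w t b - waveEnergyFlux w t a)) t := by
  have hw₁ : ContDiff ℝ 1 (uncurry (derivFst w)) := contDiff_uncurry_derivFst hw (by norm_num)
  have hw₂ : ContDiff ℝ 1 (uncurry (derivSnd w)) := contDiff_uncurry_derivSnd hw (by norm_num)
  have hflux : ContDiff ℝ 1 (uncurry (waveEnergyFlux w)) := hw₁.mul hw₂
  have hdensity : ContDiff ℝ 1 (uncurry (waveEnergyDensity w)) := (hw₁.pow 2).add (hw₂.pow 2)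
  refine (hasDerivAt_intervalIntegral_derivFst hdensity a b t).congr_deriv ?_
  calc ∫ x in a..b, derivFst (waveEnergyDensity w) t x
      = ∫ x in a..b, 2 * derivSnd (waveEnergyFlux w) t x :=
        integral_congr fun x hx => derivFst_waveEnergyDensity hw (hwave x hx)
    _ = 2 * (waveEnergyFlux w t b - waveEnergyFlux w t a) := by
        rw [intervalIntegral.integral_const_mul, integral_eq_sub_of_hasDerivAt
          (fun x _ => hasDerivAt_derivSnd (hflux.differentiable one_ne_zero) t x)
          ((continuous_derivSnd_apply hflux t).intervalIntegrable a b)]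

end WaveEnergy

namespace FwdObserverSol

variable {T ω γ₁ γ₂ : ℝ} (S : FwdObserverSol T ω γ₁ γ₂) {t x : ℝ}

/-- The second-order energy of the observer at time `t`: the wave energy of `v² = ∂ₜv¹` plus the
boundary term `γ₁|∂ₓv¹(t,0)|² / 2`. -/
noncomputable def secondOrderEnergy (t : ℝ) : ℝ :=
  (1 / 2) * ((∫ x in (0 : ℝ)..1, waveEnergyDensity S.v2 t x) + γ₁ * derivSnd S.v1 t 0 ^ 2)

lemma hasDerivWithinAt_v1 (ht : t ∈ Icc 0 T) (hx : x ∈ Icc (0 : ℝ) 1) :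
    HasDerivWithinAt (fun s => S.v1 s x) (S.v2 t x) (Icc 0 T) t :=
  S.pde1 t ht x hx ▸
    (hasDerivAt_derivFst (S.smooth_v1.differentiable two_ne_zero) t x).hasDerivWithinAt

lemma hasDerivWithinAt_derivSnd_v1 (ht : t ∈ Icc 0 T) (hx : x ∈ Icc (0 : ℝ) 1) :
    HasDerivWithinAt (fun s => derivSnd S.v1 s x) (derivSnd S.v2 t x) (Icc 0 T) t :=
  hasDerivWithinAt_derivSnd one_pos (S.smooth_v1.differentiable two_ne_zero)
    (S.smooth_v2.of_le one_le_two) (fun _ ht _ hx => S.hasDerivWithinAt_v1 ht hx) ht hx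

lemma hasDerivWithinAt_derivSnd_derivSnd_v1 (ht : t ∈ Icc 0 T) (hx : x ∈ Icc (0 : ℝ) 1) :
    HasDerivWithinAt (fun s => derivSnd (derivSnd S.v1) s x) (derivSnd (derivSnd S.v2) t x)
      (Icc 0 T) t :=
  hasDerivWithinAt_derivSnd one_pos
    ((contDiff_uncurry_derivSnd (m := 1) S.smooth_v1 (by norm_num)).differentiable one_ne_zero)
    (contDiff_uncurry_derivSnd S.smooth_v2 (by norm_num))
    (fun _ ht _ hx => S.hasDerivWithinAt_derivSnd_v1 ht hx) ht hx

lemma hasDerivAt_v2 (t x : ℝ) : HasDerivAt (fun s => S.v2 s x) (derivFst S.v2 t x) t :=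
  hasDerivAt_derivFst (S.smooth_v2.differentiable two_ne_zero) t x

lemma derivFst_derivFst_v2 (hT : 0 < T) (ht : t ∈ Icc 0 T) (hx : x ∈ Icc (0 : ℝ) 1) :
    derivFst (derivFst S.v2) t x = derivSnd (derivSnd S.v2) t x := by
  have hv2' : Differentiable ℝ (uncurry (derivFst S.v2)) :=
    (contDiff_uncurry_derivFst (m := 1) S.smooth_v2 (by norm_num)).differentiable one_ne_zero
  exact hasDerivWithinAt_Icc_unique_of_eqOn hT ht
    (hasDerivAt_derivFst hv2' t x).hasDerivWithinAt
    (S.hasDerivWithinAt_derivSnd_derivSnd_v1 ht hx) fun s hs => S.pde2 s hs x hx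

lemma v2_one (hT : 0 < T) (ht : t ∈ Icc 0 T) : S.v2 t 1 = 0 :=
  hasDerivWithinAt_Icc_unique_of_eqOn hT ht (S.hasDerivWithinAt_v1 ht (by simp))
    (hasDerivWithinAt_const t _ 0) S.bc1

lemma derivFst_v2_one (hT : 0 < T) (ht : t ∈ Icc 0 T) : derivFst S.v2 t 1 = 0 :=
  hasDerivWithinAt_Icc_unique_of_eqOn hT ht (S.hasDerivAt_v2 t 1).hasDerivWithinAt
    (hasDerivWithinAt_const t _ 0) fun _ hs => S.v2_one hT hs

lemma v2_zero (hT : 0 < T) (ht : t ∈ Icc 0 T) : S.v2 t 0 = γ₁ * S.ξ2 t := by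
  have hξ1 := (S.smooth_ξ1.differentiable one_ne_zero t).hasDerivAt
  have hξ3 := (S.smooth_ξ3.differentiable one_ne_zero t).hasDerivAt
  have hbc : S.v2 t 0 = γ₁ * deriv S.ξ1 t + γ₁ * γ₂ * deriv S.ξ3 t :=
    hasDerivWithinAt_Icc_unique_of_eqOn hT ht (S.hasDerivWithinAt_v1 ht (by simp))
      ((hξ1.const_mul γ₁).add (hξ3.const_mul (γ₁ * γ₂))).hasDerivWithinAt S.bc0
  rw [hbc, S.ode1 t ht, S.ode3 t ht]
  ring

lemma derivFst_v2_zero (hT : 0 < T) (ht : t ∈ Icc 0 T) :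
    derivFst S.v2 t 0 = γ₁ * (-ω ^ 2 * S.ξ1 t + derivSnd S.v1 t 0) := by
  have hξ2 := (S.smooth_ξ2.differentiable one_ne_zero t).hasDerivAt
  rw [S.ode2 t ht] at hξ2
  exact hasDerivWithinAt_Icc_unique_of_eqOn hT ht (S.hasDerivAt_v2 t 0).hasDerivWithinAt
    (hξ2.const_mul γ₁).hasDerivWithinAt fun _ hs => S.v2_zero hT hs

lemma hasDerivAt_derivSnd_v1_zero (hT : 0 < T) (ht : t ∈ Icc 0 T) :
    HasDerivAt (fun s => derivSnd S.v1 s 0) (derivSnd S.v2 t 0) t := by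
  have hv1' : Differentiable ℝ (uncurry (derivSnd S.v1)) :=
    (contDiff_uncurry_derivSnd (m := 1) S.smooth_v1 (by norm_num)).differentiable one_ne_zero
  have hderiv := hasDerivAt_derivFst hv1' t 0
  exact hderiv.congr_deriv <| (uniqueDiffOn_Icc hT t ht).eq_deriv _ hderiv.hasDerivWithinAt
    (S.hasDerivWithinAt_derivSnd_v1 ht (by simp))

end FwdObserverSol

theorem forward_second_order_energy_derivative_general {T ω γ₁ γ₂ t : ℝ} (hT : 0 < T)
    (S : FwdObserverSol T ω γ₁ γ₂) (ht : t ∈ Icc 0 T) :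
    HasDerivAt S.secondOrderEnergy (γ₁ * ω ^ 2 * derivSnd S.v2 t 0 * S.ξ1 t) t := by
  have hwave : ∀ x ∈ uIcc (0 : ℝ) 1,
      derivFst (derivFst S.v2) t x = derivSnd (derivSnd S.v2) t x := fun x hx =>
    S.derivFst_derivFst_v2 hT ht (uIcc_of_le (zero_le_one' ℝ) ▸ hx)
  have hbulk := hasDerivAt_integral_waveEnergyDensity S.smooth_v2 hwave
  have hboundary := ((S.hasDerivAt_derivSnd_v1_zero hT ht).pow 2).const_mul γ₁
  refine ((hbulk.add hboundary).const_mul (1 / 2)).congr_deriv ?_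
  rw [waveEnergyFlux, waveEnergyFlux, S.derivFst_v2_one hT ht, S.derivFst_v2_zero hT ht]
  ring

/-- differentiated second-order energy identity: for a classical
solution of the forward observer system with `v¹, v²` of class `C³`,
`d/dt [½(∫₀¹(|∂ₜv²|² + |∂ₓv²|²) dx + γ₁|∂ₓv¹(t,0)|²)] = γ₁ω²·∂ₓv²(t,0)·ξ₁(t)`. -/
theorem forward_second_order_energy_derivative
    (T ω γ₁ γ₂ : ℝ) (hT : 0 < T) (hγ₁ : 0 < γ₁) (hγ₂ : 0 < γ₂)
    (S : FwdObserverSol T ω γ₁ γ₂)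
    (hv1 : ContDiff ℝ 3 (Function.uncurry S.v1))
    (hv2 : ContDiff ℝ 3 (Function.uncurry S.v2))
    (E : ℝ → ℝ)
    (hE : E = fun t =>
      (1 / 2) * ((∫ x in (0:ℝ)..1,
          ((deriv (fun s => S.v2 s x) t) ^ 2 + (deriv (fun y => S.v2 t y) x) ^ 2))
        + γ₁ * (deriv (fun y => S.v1 t y) 0) ^ 2)) :
    ∀ t ∈ Icc (0:ℝ) T,
      HasDerivAt E (γ₁ * ω ^ 2 * deriv (fun y => S.v2 t y) 0 * S.ξ1 t) t := by
  intro t ht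
  rw [hE]
  exact forward_second_order_energy_derivative_general hT S ht
end

section
/- Let T ≥ 2 and let v : [0,T] × [0,1] → ℝ be of class C² and satisfy: ∂ₜₜv = ∂ₓₓv on [0,T] × [0,1]; v(t,1) = 0 and ∂ₓv(t,0) = 0 for all t ∈ [0,T]; and t ↦ v(t,0) is constant on [0,T]. Then v ≡ 0 on [0,T] × [0,1]. (This rigidity statement for the overdetermined wave system is the conclusion of the LaSalle-type argument in the proof of Theorem 2: on a time interval of length at least the minimal observability time 2, a solution with vanishing Neumann trace and constant Dirichlet trace at x = 0 must vanish identically.) -/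
open Set Filter MeasureTheory
open scoped Topology

/-! The Riemann invariants `∂ₜv ± c ∂ₓv` are constant along the characteristics `x ± c t = const`.
Both vanish on the side `x = 0`, where the Cauchy data of `v` are trivial, and the condition
`v = 0` on the side `x = L` makes each the negative of the other there. Every characteristic meets
the side `x = 0` at a time in `[0, T]`, either directly or after one reflection at `x = L`, because
a wave crosses the domain back and forth in time `2 L / c ≤ T`. Hence both invariants vanish, so
`∂ₓv = 0`, and `v` equals its value at `x = L`. -/

section Calculus

variable {V E : Type*} [NormedAddCommGroup V] [NormedSpace ℝ V]
  [NormedAddCommGroup E] [NormedSpace ℝ E]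

lemma eq_of_fderiv_sub_eq_zero_on_segment {f : V → E} {a b : V}
    (hf : ∀ z ∈ segment ℝ a b, DifferentiableAt ℝ f z)
    (h : ∀ z ∈ segment ℝ a b, fderiv ℝ f z (b - a) = 0) : f a = f b := by
  have hmem : ∀ s ∈ Icc (0 : ℝ) 1, AffineMap.lineMap a b s ∈ segment ℝ a b := fun s hs =>
    segment_eq_image_lineMap ℝ a b ▸ mem_image_of_mem _ hs
  have hderiv : ∀ s ∈ Icc (0 : ℝ) 1, HasDerivAt (f ∘ AffineMap.lineMap a b) 0 s := fun s hs =>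
    ((hf _ (hmem s hs)).hasFDerivAt.comp_hasDerivAt s AffineMap.hasDerivAt_lineMap).congr_deriv
      (h _ (hmem s hs))
  have hconst := constant_of_has_deriv_right_zero
    (fun s hs => (hderiv s hs).continuousAt.continuousWithinAt)
    (fun s hs => (hderiv s (Ico_subset_Icc_self hs)).hasDerivWithinAt) 1 (by simp)
  simpa using hconst.symm

lemma deriv_eq_zero_of_eqOn_const {f : ℝ → E} {s : Set ℝ} {t : ℝ} {a : E}
    (hs : UniqueDiffWithinAt ℝ s t) (ht : t ∈ s) (hf : DifferentiableAt ℝ f t)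
    (hconst : ∀ u ∈ s, f u = a) : deriv f t = 0 := by
  rw [← hf.derivWithin hs, derivWithin_congr hconst (hconst t ht), derivWithin_fun_const]
  rfl

lemma deriv_deriv_comp_of_hasDerivAt_const {F : V → E} {γ : ℝ → V} {w : V} {t : ℝ}
    (hγ : ∀ s, HasDerivAt γ w s) (hF : ContDiffAt ℝ 2 F (γ t)) :
    deriv (deriv (fun s => F (γ s))) t = fderiv ℝ (fderiv ℝ F) (γ t) w w := by
  have hF' : DifferentiableAt ℝ (fderiv ℝ F) (γ t) :=
    (hF.fderiv_right (m := 1) (by norm_num)).differentiableAt (by norm_num)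
  have hdiff : ∀ᶠ s in 𝓝 t, DifferentiableAt ℝ F (γ s) :=
    (hγ t).continuousAt.eventually <|
      (hF.eventually (by simp)).mono fun _ hz => hz.differentiableAt (by norm_num)
  have hderiv : deriv (fun s => F (γ s)) =ᶠ[𝓝 t] fun s => fderiv ℝ F (γ s) w :=
    hdiff.mono fun s hs => (hs.hasFDerivAt.comp_hasDerivAt s (hγ s)).deriv
  rw [hderiv.deriv_eq]
  simpa using
    ((hF'.hasFDerivAt.comp_hasDerivAt t (hγ t)).clm_apply (hasDerivAt_const t w)).deriv

end Calculus

section Wave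

variable {E : Type*} [NormedAddCommGroup E] [NormedSpace ℝ E]
  {v : ℝ → ℝ → E} {R : Set (ℝ × ℝ)} {c t x t' x' T L : ℝ}

lemma hasDerivAt_prodMk_left (x t : ℝ) : HasDerivAt (fun s : ℝ => (s, x)) (1, 0) t :=
  (hasDerivAt_id t).prodMk (hasDerivAt_const t x)

lemma hasDerivAt_prodMk_right (t x : ℝ) : HasDerivAt (fun y : ℝ => (t, y)) (0, 1) x :=
  (hasDerivAt_const x t).prodMk (hasDerivAt_id x)

lemma hasDerivAt_time (hv : DifferentiableAt ℝ (Function.uncurry v) (t, x)) :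
    HasDerivAt (fun s => v s x) (fderiv ℝ (Function.uncurry v) (t, x) (1, 0)) t :=
  HasFDerivAt.comp_hasDerivAt (l := Function.uncurry v) t hv.hasFDerivAt
    (hasDerivAt_prodMk_left x t)

lemma hasDerivAt_space (hv : DifferentiableAt ℝ (Function.uncurry v) (t, x)) :
    HasDerivAt (fun y => v t y) (fderiv ℝ (Function.uncurry v) (t, x) (0, 1)) x :=
  HasFDerivAt.comp_hasDerivAt (l := Function.uncurry v) x hv.hasFDerivAt
    (hasDerivAt_prodMk_right t x)

/-- `v` is a classical solution of the wave equation `∂ₜₜv = c² ∂ₓₓv` on the set `R` of points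
`(t, x)`. Regularity is required in a neighbourhood of each point of `R`, so that the
two-sided derivatives are meaningful on its boundary as well. -/
structure IsWaveSolutionOn (v : ℝ → ℝ → E) (c : ℝ) (R : Set (ℝ × ℝ)) : Prop where
  contDiffAt : ∀ z ∈ R, ContDiffAt ℝ 2 (Function.uncurry v) z
  wave_eq : ∀ t x, (t, x) ∈ R →
    deriv (deriv fun s => v s x) t = c ^ 2 • deriv (deriv fun y => v t y) x

/-- The Riemann invariant `∂ₜv + c ∂ₓv`, which solutions of `∂ₜₜv = c² ∂ₓₓv` transport along the
characteristics `x + c t = const`. The speed `c` is signed, so that the other family of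
characteristics is obtained by replacing `c` with `-c`. -/
noncomputable def riemannInvariant (v : ℝ → ℝ → E) (c t x : ℝ) : E :=
  deriv (fun s => v s x) t + c • deriv (fun y => v t y) x

lemma riemannInvariant_eq_fderiv (hv : DifferentiableAt ℝ (Function.uncurry v) (t, x)) :
    riemannInvariant v c t x = fderiv ℝ (Function.uncurry v) (t, x) (1, c) := by
  rw [riemannInvariant, (hasDerivAt_time hv).deriv, (hasDerivAt_space hv).deriv, ← map_smul,
    ← map_add]
  simp

lemma riemannInvariant_eq_neg_of_deriv_time_eq_zero (h : deriv (fun s => v s x) t = 0) :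
    riemannInvariant v c t x = -riemannInvariant v (-c) t x := by
  simp [riemannInvariant, h]

lemma deriv_space_eq_zero_of_riemannInvariant_eq_zero (hc : c ≠ 0)
    (h : riemannInvariant v c t x = 0) (h' : riemannInvariant v (-c) t x = 0) :
    deriv (fun y => v t y) x = 0 := by
  have hdiff : (2 * c) • deriv (fun y => v t y) x = 0 :=
    calc (2 * c) • deriv (fun y => v t y) x
        = riemannInvariant v c t x - riemannInvariant v (-c) t x := by
          unfold riemannInvariant; module
      _ = 0 := by rw [h, h', sub_zero]
  exact (smul_eq_zero.mp hdiff).resolve_left (mul_ne_zero two_ne_zero hc)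

namespace IsWaveSolutionOn

lemma neg_speed (hv : IsWaveSolutionOn v c R) : IsWaveSolutionOn v (-c) R :=
  ⟨hv.contDiffAt, by simpa using hv.wave_eq⟩

lemma differentiableAt (hv : IsWaveSolutionOn v c R) {z : ℝ × ℝ} (hz : z ∈ R) :
    DifferentiableAt ℝ (Function.uncurry v) z :=
  (hv.contDiffAt z hz).differentiableAt (by norm_num)

lemma differentiableAt_time (hv : IsWaveSolutionOn v c R) (h : (t, x) ∈ R) :
    DifferentiableAt ℝ (fun s => v s x) t :=
  (hasDerivAt_time (hv.differentiableAt h)).differentiableAt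

lemma differentiableAt_space (hv : IsWaveSolutionOn v c R) (h : (t, x) ∈ R) :
    DifferentiableAt ℝ (fun y => v t y) x :=
  (hasDerivAt_space (hv.differentiableAt h)).differentiableAt

lemma fderiv_fderiv_characteristic_directions_eq_zero (hv : IsWaveSolutionOn v c R)
    {z : ℝ × ℝ} (hz : z ∈ R) :
    fderiv ℝ (fderiv ℝ (Function.uncurry v)) z (1, -c) (1, c) = 0 := by
  obtain ⟨t, x⟩ := z
  set B := fderiv ℝ (fderiv ℝ (Function.uncurry v)) (t, x)
  have hF := hv.contDiffAt (t, x) hz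
  have htt : deriv (deriv fun s => v s x) t = B (1, 0) (1, 0) :=
    deriv_deriv_comp_of_hasDerivAt_const (hasDerivAt_prodMk_left x) hF
  have hxx : deriv (deriv fun y => v t y) x = B (0, 1) (0, 1) :=
    deriv_deriv_comp_of_hasDerivAt_const (hasDerivAt_prodMk_right t) hF
  have hwave : B (1, 0) (1, 0) = c ^ 2 • B (0, 1) (0, 1) := by
    rw [← htt, ← hxx, hv.wave_eq t x hz]
  have hsymm : B (1, 0) (0, 1) = B (0, 1) (1, 0) := hF.isSymmSndFDerivAt (by simp) (1, 0) (0, 1)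
  have hsplit : ∀ a : ℝ, ((1, a) : ℝ × ℝ) = (1, 0) + a • (0, 1) := fun a => by simp
  rw [hsplit (-c), hsplit c]
  simp only [map_add, map_smul, add_apply, smul_apply, hwave, hsymm]
  module

theorem riemannInvariant_eq_of_mem_characteristic (hv : IsWaveSolutionOn v c R)
    (hR : Convex ℝ R) (h : (t, x) ∈ R) (h' : (t', x') ∈ R) (hchar : x + c * t = x' + c * t') :
    riemannInvariant v c t x = riemannInvariant v c t' x' := by
  have hdiff : ∀ z ∈ R, DifferentiableAt ℝ (fderiv ℝ (Function.uncurry v)) z := fun z hz =>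
    ((hv.contDiffAt z hz).fderiv_right (m := 1) (by norm_num)).differentiableAt (by norm_num)
  have hdir : ((t', x') : ℝ × ℝ) - (t, x) = (t' - t) • (1, -c) := by
    ext
    · simp
    · simp only [Prod.snd_sub, Prod.smul_snd, smul_eq_mul]
      linear_combination -hchar
  have hseg := hR.segment_subset h h'
  rw [riemannInvariant_eq_fderiv (hv.differentiableAt h),
    riemannInvariant_eq_fderiv (hv.differentiableAt h')]
  refine eq_of_fderiv_sub_eq_zero_on_segment
    (f := fun z => fderiv ℝ (Function.uncurry v) z (1, c))
    (fun z hz => (hdiff z (hseg hz)).clm_apply (differentiableAt_const _)) fun z hz => ?_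
  rw [fderiv_clm_apply (hdiff z (hseg hz)) (differentiableAt_const _), hdir, map_smul]
  simp [hv.fderiv_fderiv_characteristic_directions_eq_zero (hseg hz)]

lemma riemannInvariant_eq_zero_of_add_div_mem (hc : c ≠ 0)
    (hv : IsWaveSolutionOn v c (Icc 0 T ×ˢ Icc 0 L))
    (hleft : ∀ s ∈ Icc 0 T, riemannInvariant v c s 0 = 0)
    (ht : t ∈ Icc 0 T) (hx : x ∈ Icc 0 L) (hfoot : t + x / c ∈ Icc 0 T) :
    riemannInvariant v c t x = 0 := by
  rw [hv.riemannInvariant_eq_of_mem_characteristic ((convex_Icc 0 T).prod (convex_Icc 0 L))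
    (mk_mem_prod ht hx) (mk_mem_prod hfoot ⟨le_rfl, hx.1.trans hx.2⟩) (by field_simp; ring)]
  exact hleft _ hfoot

theorem riemannInvariant_eq_zero (hc : c ≠ 0) (hT : 2 * (L / |c|) ≤ T)
    (hv : IsWaveSolutionOn v c (Icc 0 T ×ˢ Icc 0 L))
    (hleft : ∀ s ∈ Icc 0 T, ∀ b, riemannInvariant v b s 0 = 0)
    (hright : ∀ s ∈ Icc 0 T, deriv (fun r => v r L) s = 0)
    (ht : t ∈ Icc 0 T) (hx : x ∈ Icc 0 L) : riemannInvariant v c t x = 0 := by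
  by_cases hfoot : t + x / c ∈ Icc 0 T
  · exact hv.riemannInvariant_eq_zero_of_add_div_mem hc (fun s hs => hleft s hs c) ht hx hfoot
  -- The characteristic meets `x = L` at time `t + (x - L) / c`, and its reflection meets
  -- `x = 0` at time `t + (x - L) / c - L / c`.
  have htimes : t + (x / c - L / c) ∈ Icc 0 T ∧ t + (x / c - L / c) + L / -c ∈ Icc 0 T := by
    rw [div_neg]
    simp only [mem_Icc, not_and_or, not_le] at ht hfoot ⊢
    rcases hc.lt_or_gt with hneg | hpos
    · rw [abs_of_neg hneg, div_neg] at hT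
      have h0 := div_nonpos_of_nonneg_of_nonpos hx.1 hneg.le
      have hL := div_le_div_of_nonpos_of_le hneg.le hx.2
      grind
    · rw [abs_of_pos hpos] at hT
      have h0 := div_nonneg hx.1 hpos.le
      have hL := div_le_div_of_nonneg_right hx.2 hpos.le
      grind
  have hL : L ∈ Icc 0 L := ⟨hx.1.trans hx.2, le_rfl⟩
  rw [hv.riemannInvariant_eq_of_mem_characteristic ((convex_Icc 0 T).prod (convex_Icc 0 L))
      (mk_mem_prod ht hx) (mk_mem_prod htimes.1 hL) (by field_simp; ring),
    riemannInvariant_eq_neg_of_deriv_time_eq_zero (hright _ htimes.1),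
    hv.neg_speed.riemannInvariant_eq_zero_of_add_div_mem (neg_ne_zero.mpr hc)
      (fun s hs => hleft s hs (-c)) htimes.1 hL htimes.2, neg_zero]

theorem deriv_space_eq_zero (hc : 0 < c) (hT : 2 * (L / c) ≤ T)
    (hv : IsWaveSolutionOn v c (Icc 0 T ×ˢ Icc 0 L))
    (hleft : ∀ s ∈ Icc 0 T, ∀ b, riemannInvariant v b s 0 = 0)
    (hright : ∀ s ∈ Icc 0 T, deriv (fun r => v r L) s = 0)
    (ht : t ∈ Icc 0 T) (hx : x ∈ Icc 0 L) : deriv (fun y => v t y) x = 0 :=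
  deriv_space_eq_zero_of_riemannInvariant_eq_zero hc.ne'
    (hv.riemannInvariant_eq_zero hc.ne' (by rwa [abs_of_pos hc]) hleft hright ht hx)
    (hv.neg_speed.riemannInvariant_eq_zero (neg_ne_zero.mpr hc.ne')
      (by rwa [abs_neg, abs_of_pos hc]) hleft hright ht hx)

end IsWaveSolutionOn

theorem overdetermined_wave_rigidity_general (hc : 0 < c) (hL : 0 < L) (hT : 2 * (L / c) ≤ T)
    (hv : IsWaveSolutionOn v c (Icc 0 T ×ˢ Icc 0 L))
    (hdirichlet : ∀ t ∈ Icc 0 T, v t L = 0)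
    (hneumann : ∀ t ∈ Icc 0 T, deriv (fun y => v t y) 0 = 0)
    (hconst : ∀ t ∈ Icc 0 T, ∀ t' ∈ Icc 0 T, v t 0 = v t' 0) :
    ∀ t ∈ Icc 0 T, ∀ x ∈ Icc 0 L, v t x = 0 := by
  have hT0 : 0 < T := lt_of_lt_of_le (by positivity) hT
  have hL0 : 0 ∈ Icc 0 L := left_mem_Icc.mpr hL.le
  have hLL : L ∈ Icc 0 L := right_mem_Icc.mpr hL.le
  have hleft : ∀ t ∈ Icc 0 T, ∀ b, riemannInvariant v b t 0 = 0 := fun t ht b => by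
    have htime := deriv_eq_zero_of_eqOn_const (uniqueDiffOn_Icc hT0 t ht) ht
      (hv.differentiableAt_time (mk_mem_prod ht hL0)) fun s hs => hconst s hs t ht
    rw [riemannInvariant, htime, hneumann t ht, smul_zero, add_zero]
  have hright : ∀ t ∈ Icc 0 T, deriv (fun s => v s L) t = 0 := fun t ht =>
    deriv_eq_zero_of_eqOn_const (uniqueDiffOn_Icc hT0 t ht) ht
      (hv.differentiableAt_time (mk_mem_prod ht hLL)) hdirichlet
  intro t ht x hx
  have hspace : ∀ y ∈ Icc 0 L, HasDerivAt (fun y => v t y) 0 y := fun y hy =>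
    (hv.differentiableAt_space (mk_mem_prod ht hy)).hasDerivAt.congr_deriv
      (hv.deriv_space_eq_zero hc hT hleft hright ht hy)
  have hslice : ∀ y ∈ Icc 0 L, v t y = v t 0 := constant_of_has_deriv_right_zero
    (fun y hy => (hspace y hy).continuousAt.continuousWithinAt)
    fun y hy => (hspace y (Ico_subset_Icc_self hy)).hasDerivWithinAt
  rw [hslice x hx, ← hslice L hLL, hdirichlet t ht]

end Wave

/-- rigidity of the overdetermined wave system: for `T ≥ 2`, a `C²`
solution of the homogeneous wave equation on `[0,T] × [0,1]` with `v(t,1) = 0`,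
vanishing Neumann trace `∂ₓv(t,0) = 0`, and constant-in-time Dirichlet trace
`t ↦ v(t,0)`, vanishes identically on `[0,T] × [0,1]`. -/
theorem overdetermined_wave_rigidity
    (T : ℝ) (hT : 2 ≤ T)
    (v : ℝ → ℝ → ℝ) (hv : ContDiff ℝ 2 (Function.uncurry v))
    (hwave : ∀ t ∈ Icc (0:ℝ) T, ∀ x ∈ Icc (0:ℝ) 1,
      deriv (deriv (fun s => v s x)) t = deriv (deriv (fun y => v t y)) x)
    (hbc1 : ∀ t ∈ Icc (0:ℝ) T, v t 1 = 0)
    (hneumann : ∀ t ∈ Icc (0:ℝ) T, deriv (fun y => v t y) 0 = 0)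
    (hconst : ∀ t ∈ Icc (0:ℝ) T, ∀ t' ∈ Icc (0:ℝ) T, v t 0 = v t' 0) :
    ∀ t ∈ Icc (0:ℝ) T, ∀ x ∈ Icc (0:ℝ) 1, v t x = 0 :=
  overdetermined_wave_rigidity_general one_pos one_pos (by simpa using hT)
    ⟨fun _ _ => hv.contDiffAt, fun t x h => by simpa using hwave t h.1 x h.2⟩ hbc1 hneumann hconst
end
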